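/- Let α be a countable ordinal, let f ∈ Den[a,b], and let F(x) = ∫_a^x f (the indefinite Denjoy integral). Then D_{f,F}^{α+1}([a,b]) = ∅ if and only if f ∈ Den_α[a,b]. -/

import Mathlib

open MeasureTheory Set Filter

noncomputable section

attribute [local instance] Classical.propDecidable

/-- The oscillation `ω(F, J)` of `F` on the set `J`. -/
def osc (F : ℝ → ℝ) (J : Set ℝ) : ℝ :=
  sSup {d : ℝ | ∃ x ∈ J, ∃ y ∈ J, d = |F x - F y|}

/-- `D` is a `K`-edged pre-partition of `[a,b]`: a finite nonempty collection of
pairwise non-overlapping closed subintervals of `[a,b]` whose endpoints lie in `K`. -/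
def IsPrePartition (a b : ℝ) (K : Set ℝ) (D : Finset (ℝ × ℝ)) : Prop :=
  D.Nonempty ∧
  (∀ p ∈ D, p.1 ≤ p.2 ∧ p.1 ∈ K ∧ p.2 ∈ K ∧ Icc p.1 p.2 ⊆ Icc a b) ∧
  (D : Set (ℝ × ℝ)).Pairwise fun p q => p.2 ≤ q.1 ∨ q.2 ≤ p.1

/-- `F ∈ AC_*(K)`: absolute continuity in the restricted sense on `K`. -/
def ACStar (a b : ℝ) (F : ℝ → ℝ) (K : Set ℝ) : Prop :=
  ∀ ε > (0:ℝ), ∃ δ > (0:ℝ), ∀ D : Finset (ℝ × ℝ), IsPrePartition a b K D →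
    (∑ p ∈ D, (p.2 - p.1)) < δ → (∑ p ∈ D, osc F (Icc p.1 p.2)) < ε

/-- `F ∈ ACG_*(K)`: `K` is a countable union of closed sets `Kₙ ⊆ [a,b]` with `F ∈ AC_*(Kₙ)`. -/
def ACGStar (a b : ℝ) (F : ℝ → ℝ) (K : Set ℝ) : Prop :=
  ∃ C : ℕ → Set ℝ, (∀ n, IsClosed (C n) ∧ C n ⊆ Icc a b ∧ ACStar a b F (C n)) ∧
    K = ⋃ n, C n

/-- `F` is the indefinite Denjoy integral of `f` on `[a,b]`:
`F` is continuous on `[a,b]`, `F(a) = 0`, `F ∈ ACG_*([a,b])`, and `F' = f` a.e. on `[a,b]`. -/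
def HasDenjoyIntegralFn (a b : ℝ) (f F : ℝ → ℝ) : Prop :=
  ContinuousOn F (Icc a b) ∧ F a = 0 ∧ ACGStar a b F (Icc a b) ∧
    ∀ᵐ x ∂(volume.restrict (Icc a b)), HasDerivAt F (f x) x

/-- `f ∈ Den[a,b]`: `f` is Denjoy integrable on `[a,b]`. -/
def DenjoyIntegrable (a b : ℝ) (f : ℝ → ℝ) : Prop :=
  ∃ F : ℝ → ℝ, HasDenjoyIntegralFn a b f F

/-- The Denjoy integral `∫_a^b f` (junk value `0` if `f` is not Denjoy integrable). -/
def denjoyIntegral (a b : ℝ) (f : ℝ → ℝ) : ℝ :=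
  if h : DenjoyIntegrable a b f then Classical.choose h b else 0

/-- The derivative `D_f(K)`: points of `K` at which `f` is not locally Lebesgue integrable
relative to `K`. -/
def Df (f : ℝ → ℝ) (K : Set ℝ) : Set ℝ :=
  {x ∈ K | ∀ c d : ℝ, c < x → x < d → ¬ IntegrableOn f (Icc c d ∩ K) volume}

/-- The derivative `D_F(K)`: points of `K` at which `F` is not locally `AC_*` relative to `K`. -/
def DF (a b : ℝ) (F : ℝ → ℝ) (K : Set ℝ) : Set ℝ :=
  {x ∈ K | ∀ c d : ℝ, c < x → x < d → ¬ ACStar a b F (Icc c d ∩ K)}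

/-- The derivative `D_{f,F}(K) = D_f(K) ∪ D_F(K)`. -/
def DfF (a b : ℝ) (f F : ℝ → ℝ) (K : Set ℝ) : Set ℝ := Df f K ∪ DF a b F K

/-- Transfinite iterates of a derivative operation on sets:
`D⁰(K) = K`, `D^(α+1)(K) = D(D^α(K))`, and `D^α(K) = ⋂_(β<α) D^β(K)` for limit `α`. -/
def derivIter (D : Set ℝ → Set ℝ) (K : Set ℝ) (α : Ordinal.{0}) : Set ℝ :=
  Ordinal.limitRecOn α K (fun _ ih => D ih) (fun o _ ih => ⋂ β : Iio o, ih β.1 β.2)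

/-- `D^∞(K) = ⋂_(α<ω₁) D^α(K)`. -/
def derivInfty (D : Set ℝ → Set ℝ) (K : Set ℝ) : Set ℝ :=
  ⋂ (α : Ordinal.{0}) (_ : α.card ≤ Cardinal.aleph0), derivIter D K α

/-- `Lim(X)`: the improper integrals of `X`. -/
def LimSet (a b : ℝ) (X : Set (ℝ → ℝ)) : Set (ℝ → ℝ) :=
  {f | ∃ A B : ℕ → ℝ,
    (∀ n, a ≤ A n ∧ B n ≤ b ∧ A (n+1) ≤ A n ∧ B n ≤ B (n+1)) ∧
    (⋃ n, Ioo (A n) (B n)) = Ioo a b ∧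
    (∀ n, A n < B n → (Ioo (A n) (B n)).indicator f ∈ X) ∧
    (∃ L, Tendsto (fun c => denjoyIntegral c (B 0) f) (nhdsWithin a (Ioi a)) (nhds L)) ∧
    (∃ L, Tendsto (fun c => denjoyIntegral (A 0) c f) (nhdsWithin b (Iio b)) (nhds L))}

/-- `Step(X)`: the functions given by the Step Lemma from `X`. -/
def StepSet (a b : ℝ) (X : Set (ℝ → ℝ)) : Set (ℝ → ℝ) :=
  {f | ∃ K : Set ℝ, IsClosed K ∧ K ⊆ Icc a b ∧
    ∃ c d : ℕ → ℝ, (∀ n, c n ≤ d n) ∧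
      (Pairwise fun m n => Disjoint (Ioo (c m) (d m)) (Ioo (c n) (d n))) ∧
      (⋃ n, Ioo (c n) (d n)) = Ioo a b \ K ∧
      IntegrableOn f K volume ∧
      (∀ n, c n < d n → (Ioo (c n) (d n)).indicator f ∈ X) ∧
      ∃ F : ℝ → ℝ, HasDenjoyIntegralFn a b f F ∧ ACStar a b F K}

/-- The hierarchy `Den_α[a,b]`: `Den₀ = L¹[a,b]` and
`Den_α = Step(Lim(⋃_(β<α) Den_β))` for `α > 0`. -/
def DenLevel (a b : ℝ) : Ordinal.{0} → Set (ℝ → ℝ) :=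
  Ordinal.lt_wf.fix fun α ih =>
    if α = 0 then {f | IntegrableOn f (Icc a b) volume}
    else StepSet a b (LimSet a b (⋃ β : Iio α, ih β.1 β.2))

/-!
By compactness `D^(α+1) = ∅` means that `f` is integrable and `F` is `AC_*` on the closed set
`K = D^α`. If a closed interval `[u, v]` misses `K`, compactness again gives a `β < α` such that
`[u, v]` misses `D^(β+1)`; as derivatives are local, the cut-off of `f` to `(u, v)` has empty
`(β+1)`-st derivative, hence lies in `Den_β` by induction. This is not yet a `Step` decomposition
along `K`, since the closure of a gap of `K` meets `K`. So `K ∪ {a, b}` is enlarged, in each gap, by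
sequences tending to both endpoints: the closures of the new gaps avoid `K`. The sequences are
chosen so sparse that the oscillation of `F` on each new gap is at most the mass given to that gap
by a suitable finite measure `ν ≪ volume`, whence `F` stays `AC_*` on the enlarged set.

Conversely, if `f ∈ Step(Lim(⋃_(β<α) Den_β))` along `K`, then the points outside `K ∪ {a, b}` have
neighbourhoods such that the cut-off of `f` to them lies in some `Den_β`, `β < α`. By locality and
induction these points are not in `D^(β+1) ⊇ D^α`, so `D^α ⊆ K ∪ {a, b}`, where `f` is integrable
and `F` is `AC_*`.
-/

open scoped Topology ENNReal

/-! ### Oscillation -/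

section Oscillation

variable {F G : ℝ → ℝ} {J J' : Set ℝ} {p q r : ℝ}

lemma osc_nonneg (F : ℝ → ℝ) (J : Set ℝ) : 0 ≤ osc F J := by
  apply Real.sSup_nonneg
  rintro d ⟨x, -, y, -, rfl⟩
  exact abs_nonneg _

lemma osc_le {C : ℝ} (hC : 0 ≤ C) (h : ∀ x ∈ J, ∀ y ∈ J, |F x - F y| ≤ C) : osc F J ≤ C := by
  apply Real.sSup_le _ hC
  rintro d ⟨x, hx, y, hy, rfl⟩
  exact h x hx y hy

lemma osc_of_subsingleton (hJ : J.Subsingleton) : osc F J = 0 :=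
  (osc_le le_rfl fun x hx y hy => by simp [hJ hx hy]).antisymm (osc_nonneg F J)

lemma osc_congr (h : ∀ x ∈ J, ∀ y ∈ J, F x - F y = G x - G y) : osc F J = osc G J := by
  have hset : {d : ℝ | ∃ x ∈ J, ∃ y ∈ J, d = |F x - F y|} =
      {d : ℝ | ∃ x ∈ J, ∃ y ∈ J, d = |G x - G y|} := by
    ext d
    constructor <;> rintro ⟨x, hx, y, hy, rfl⟩ <;> exact ⟨x, hx, y, hy, by rw [h x hx y hy]⟩
  rw [osc, osc, hset]

lemma abs_sub_le_osc (hJ : IsCompact J) (hF : ContinuousOn F J) {x y : ℝ} (hx : x ∈ J)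
    (hy : y ∈ J) : |F x - F y| ≤ osc F J := by
  obtain ⟨C, hC⟩ := hJ.exists_bound_of_continuousOn hF
  refine le_csSup ⟨C + C, ?_⟩ ⟨x, hx, y, hy, rfl⟩
  rintro d ⟨x, hx, y, hy, rfl⟩
  exact (abs_sub _ _).trans (add_le_add (hC x hx) (hC y hy))

lemma osc_mono (hJ : IsCompact J) (hF : ContinuousOn F J) (h : J' ⊆ J) : osc F J' ≤ osc F J :=
  osc_le (osc_nonneg F J) fun _ hx _ hy => abs_sub_le_osc hJ hF (h hx) (h hy)

lemma osc_sub_le (hJ : IsCompact J) (hF : ContinuousOn F J) (hG : ContinuousOn G J) :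
    osc (F - G) J ≤ osc F J + osc G J := by
  refine osc_le (add_nonneg (osc_nonneg F J) (osc_nonneg G J)) fun x hx y hy => ?_
  have hFxy := abs_sub_le_osc hJ hF hx hy
  have hGxy := abs_sub_le_osc hJ hG hx hy
  calc |F x - G x - (F y - G y)| = |(F x - F y) - (G x - G y)| := by ring_nf
    _ ≤ |F x - F y| + |G x - G y| := abs_sub _ _
    _ ≤ osc F J + osc G J := add_le_add hFxy hGxy

lemma osc_Icc_le_add (hF : ContinuousOn F (Icc p q)) (hpr : p ≤ r) (hrq : r ≤ q) :
    osc F (Icc p q) ≤ osc F (Icc p r) + osc F (Icc r q) := by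
  have hFl : ContinuousOn F (Icc p r) := hF.mono (Icc_subset_Icc_right hrq)
  have hFr : ContinuousOn F (Icc r q) := hF.mono (Icc_subset_Icc_left hpr)
  have hl := osc_nonneg F (Icc p r)
  have hr := osc_nonneg F (Icc r q)
  have of_le : ∀ x ∈ Icc p q, ∀ y ∈ Icc p q, x ≤ y →
      |F x - F y| ≤ osc F (Icc p r) + osc F (Icc r q) := by
    intro x hx y hy hxy
    rcases le_total y r with hyr | hyr
    · linarith [abs_sub_le_osc isCompact_Icc hFl ⟨hx.1, hxy.trans hyr⟩ ⟨hy.1, hyr⟩]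
    rcases le_total r x with hxr | hxr
    · linarith [abs_sub_le_osc isCompact_Icc hFr ⟨hxr, hx.2⟩ ⟨hyr, hy.2⟩]
    · linarith [abs_sub_le_osc isCompact_Icc hFl ⟨hx.1, hxr⟩ ⟨hpr, le_rfl⟩,
        abs_sub_le_osc isCompact_Icc hFr ⟨le_rfl, hrq⟩ ⟨hyr, hy.2⟩, abs_sub_le (F x) (F r) (F y)]
  refine osc_le (by linarith) fun x hx y hy => ?_
  rcases le_total x y with hxy | hyx
  · exact of_le x hx y hy hxy
  · exact abs_sub_comm (F x) (F y) ▸ of_le y hy x hx hyx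

lemma volume_image_le_osc (hJ : IsCompact J) (hF : ContinuousOn F J) (h : J' ⊆ J) :
    volume (F '' J') ≤ ENNReal.ofReal (osc F J) := by
  refine (Real.volume_le_diam _).trans (Metric.ediam_le ?_)
  rintro _ ⟨x, hx, rfl⟩ _ ⟨y, hy, rfl⟩
  rw [edist_dist, Real.dist_eq]
  exact ENNReal.ofReal_le_ofReal (abs_sub_le_osc hJ hF (h hx) (h hy))

end Oscillation

/-! ### Non-overlapping intervals and gaps -/

section NonOverlapping

variable {ι : Type*} {s t : Set ι} {l r l' r' : ι → ℝ}

/-- The closed intervals `[l i, r i]`, `i ∈ s`, are pairwise non-overlapping (and nonempty, but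
possibly degenerate). -/
def NonOverlapping (s : Set ι) (l r : ι → ℝ) : Prop :=
  (∀ i ∈ s, l i ≤ r i) ∧ s.Pairwise fun i j => r i ≤ l j ∨ r j ≤ l i

lemma NonOverlapping.shrink (h : NonOverlapping s l r) (hts : t ⊆ s) (hl : ∀ i ∈ t, l i ≤ l' i)
    (hlr : ∀ i ∈ t, l' i ≤ r' i) (hr : ∀ i ∈ t, r' i ≤ r i) : NonOverlapping t l' r' :=
  ⟨hlr, fun i hi j hj hij => (h.2 (hts hi) (hts hj) hij).imp
    (fun h => (hr i hi).trans (h.trans (hl j hj))) fun h => (hr j hj).trans (h.trans (hl i hi))⟩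

lemma NonOverlapping.mono (h : NonOverlapping s l r) (hts : t ⊆ s) : NonOverlapping t l r :=
  h.shrink hts (fun _ _ => le_rfl) (fun i hi => h.1 i (hts hi)) fun _ _ => le_rfl

lemma NonOverlapping.pairwiseDisjoint (h : NonOverlapping s l r) :
    s.PairwiseDisjoint fun i => Ioo (l i) (r i) := by
  refine fun i hi j hj hij => disjoint_left.2 fun x hxi hxj => ?_
  rcases h.2 hi hj hij with h | h
  · exact (hxi.2.trans_le h).not_gt hxj.1
  · exact (hxj.2.trans_le h).not_gt hxi.1

lemma NonOverlapping.sum_measure_Ioo {s : Finset ι} (h : NonOverlapping (s : Set ι) l r)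
    (ν : Measure ℝ) : ∑ i ∈ s, ν (Ioo (l i) (r i)) = ν (⋃ i ∈ s, Ioo (l i) (r i)) :=
  (measure_biUnion_finset h.pairwiseDisjoint fun _ _ => measurableSet_Ioo).symm

lemma NonOverlapping.ofReal_sum_length {s : Finset ι} (h : NonOverlapping (s : Set ι) l r) :
    ENNReal.ofReal (∑ i ∈ s, (r i - l i)) = volume (⋃ i ∈ s, Ioo (l i) (r i)) := by
  rw [ENNReal.ofReal_sum_of_nonneg fun i hi => sub_nonneg.2 (h.1 i hi), ← h.sum_measure_Ioo]
  simp only [Real.volume_Ioo]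

lemma IsPrePartition.nonOverlapping {a b : ℝ} {K : Set ℝ} {D : Finset (ℝ × ℝ)}
    (hD : IsPrePartition a b K D) : NonOverlapping (D : Set (ℝ × ℝ)) Prod.fst Prod.snd :=
  ⟨fun p hp => (hD.2.1 p hp).1, hD.2.2⟩

lemma IsPrePartition.bounds {a b : ℝ} {K : Set ℝ} {D : Finset (ℝ × ℝ)}
    (hD : IsPrePartition a b K D) {p : ℝ × ℝ} (hp : p ∈ D) : a ≤ p.1 ∧ p.2 ≤ b := by
  obtain ⟨hle, -, -, hsub⟩ := hD.2.1 p hp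
  exact (Icc_subset_Icc_iff hle).1 hsub

end NonOverlapping

section Gaps

variable {U : Set ℝ}

/-- The connected components of an open set `U`, an interval `(l, r)` being encoded as the pair
`(l, r)`; unbounded components are left out. -/
def gaps (U : Set ℝ) : Set (ℝ × ℝ) :=
  {I | I.1 < I.2 ∧ Ioo I.1 I.2 ⊆ U ∧ I.1 ∉ U ∧ I.2 ∉ U}

lemma nonOverlapping_gaps (U : Set ℝ) : NonOverlapping (gaps U) Prod.fst Prod.snd := by
  refine ⟨fun I hI => hI.1.le, fun I hI J hJ hIJ => ?_⟩
  by_contra! hlt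
  have fst_le {I J : ℝ × ℝ} (hI : I ∈ gaps U) (hJ : J ∈ gaps U) (h : I.1 < J.2) : I.1 ≤ J.1 :=
    not_lt.1 fun h' => hI.2.2.1 (hJ.2.1 ⟨h', h⟩)
  have le_snd {I J : ℝ × ℝ} (hI : I ∈ gaps U) (hJ : J ∈ gaps U) (h : J.1 < I.2) : J.2 ≤ I.2 :=
    not_lt.1 fun h' => hI.2.2.2 (hJ.2.1 ⟨h, h'⟩)
  exact hIJ (Prod.ext ((fst_le hI hJ hlt.2).antisymm (fst_le hJ hI hlt.1))
    ((le_snd hJ hI hlt.2).antisymm (le_snd hI hJ hlt.1)))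

lemma countable_gaps (U : Set ℝ) : (gaps U).Countable :=
  (nonOverlapping_gaps U).pairwiseDisjoint.countable_of_isOpen (fun _ _ => isOpen_Ioo)
    fun _ hI => nonempty_Ioo.2 hI.1

lemma exists_mem_gaps (hU : IsOpen U) (hbelow : BddBelow U) (habove : BddAbove U) {x : ℝ}
    (hx : x ∈ U) : ∃ I ∈ gaps U, x ∈ Ioo I.1 I.2 := by
  have hbddl : BddAbove (Uᶜ ∩ Iic x) := ⟨x, fun y hy => hy.2⟩
  have hbddr : BddBelow (Uᶜ ∩ Ici x) := ⟨x, fun y hy => hy.2⟩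
  have hl : sSup (Uᶜ ∩ Iic x) ∈ Uᶜ ∩ Iic x := by
    obtain ⟨m, hm⟩ := hbelow
    exact (hU.isClosed_compl.inter isClosed_Iic).csSup_mem
      ⟨m - 1, fun h => by linarith [hm h], by simpa using by linarith [hm hx]⟩ hbddl
  have hr : sInf (Uᶜ ∩ Ici x) ∈ Uᶜ ∩ Ici x := by
    obtain ⟨M, hM⟩ := habove
    exact (hU.isClosed_compl.inter isClosed_Ici).csInf_mem
      ⟨M + 1, fun h => by linarith [hM h], by simpa using by linarith [hM hx]⟩ hbddr
  have hlx : sSup (Uᶜ ∩ Iic x) < x := lt_of_le_of_ne hl.2 fun h => hl.1 (by rwa [h])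
  have hxr : x < sInf (Uᶜ ∩ Ici x) := lt_of_le_of_ne hr.2 fun h => hr.1 (by rwa [← h])
  refine ⟨(sSup (Uᶜ ∩ Iic x), sInf (Uᶜ ∩ Ici x)), ⟨hlx.trans hxr, fun y hy => ?_, hl.1, hr.1⟩,
    hlx, hxr⟩
  by_contra hyU
  rcases le_total y x with h | h
  · exact hy.1.not_ge (le_csSup hbddl ⟨hyU, h⟩)
  · exact hy.2.not_ge (csInf_le hbddr ⟨hyU, h⟩)

lemma biUnion_gaps (hU : IsOpen U) (hbelow : BddBelow U) (habove : BddAbove U) :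
    ⋃ I ∈ gaps U, Ioo I.1 I.2 = U :=
  (iUnion₂_subset fun _ hI => hI.2.1).antisymm fun _ hx =>
    have ⟨I, hI, hxI⟩ := exists_mem_gaps hU hbelow habove hx
    mem_iUnion₂.2 ⟨I, hI, hxI⟩

end Gaps

/-! ### Absolute continuity in the restricted sense -/

section ACStar

variable {a b : ℝ} {F G : ℝ → ℝ} {K L : Set ℝ}

lemma ACStar.of_osc_le (hF : ACStar a b F L) (hKL : K ∩ Icc a b ⊆ L)
    (hosc : ∀ p ∈ K, ∀ q ∈ K, a ≤ p → p ≤ q → q ≤ b → osc G (Icc p q) ≤ osc F (Icc p q)) :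
    ACStar a b G K := by
  intro ε hε
  obtain ⟨δ, hδ, H⟩ := hF ε hε
  refine ⟨δ, hδ, fun D hD hlen => ?_⟩
  have hDL : IsPrePartition a b L D := ⟨hD.1, fun p hp => by
    obtain ⟨hle, h1, h2, hsub⟩ := hD.2.1 p hp
    exact ⟨hle, hKL ⟨h1, hsub (left_mem_Icc.2 hle)⟩, hKL ⟨h2, hsub (right_mem_Icc.2 hle)⟩, hsub⟩,
    hD.2.2⟩
  refine (Finset.sum_le_sum fun p hp => ?_).trans_lt (H D hDL hlen)
  obtain ⟨hle, h1, h2, -⟩ := hD.2.1 p hp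
  exact hosc _ h1 _ h2 (hD.bounds hp).1 hle (hD.bounds hp).2

lemma ACStar.mono (hF : ACStar a b F L) (hKL : K ⊆ L) : ACStar a b F K :=
  hF.of_osc_le (inter_subset_left.trans hKL) fun _ _ _ _ _ _ _ => le_rfl

lemma ACStar.congr (hF : ACStar a b F K)
    (hFG : ∀ x ∈ Icc a b, ∀ y ∈ Icc a b, F x - F y = G x - G y) : ACStar a b G K :=
  hF.of_osc_le inter_subset_left fun _ _ _ _ hap _ hqb => (osc_congr fun x hx y hy =>
    hFG x (Icc_subset_Icc hap hqb hx) y (Icc_subset_Icc hap hqb hy)).ge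

lemma ACStar.restrict {c d : ℝ} (hF : ACStar a b F K) (hac : a ≤ c) (hdb : d ≤ b) :
    ACStar c d F K := by
  intro ε hε
  obtain ⟨δ, hδ, H⟩ := hF ε hε
  refine ⟨δ, hδ, fun D hD hlen => H D ⟨hD.1, fun p hp => ?_, hD.2.2⟩ hlen⟩
  obtain ⟨hle, h1, h2, hsub⟩ := hD.2.1 p hp
  exact ⟨hle, h1, h2, hsub.trans (Icc_subset_Icc hac hdb)⟩

lemma ACStar.sub (hFc : ContinuousOn F (Icc a b)) (hGc : ContinuousOn G (Icc a b))
    (hF : ACStar a b F K) (hG : ACStar a b G K) : ACStar a b (F - G) K := by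
  intro ε hε
  obtain ⟨δ, hδ, HF⟩ := hF (ε / 2) (half_pos hε)
  obtain ⟨δ', hδ', HG⟩ := hG (ε / 2) (half_pos hε)
  refine ⟨min δ δ', lt_min hδ hδ', fun D hD hlen => ?_⟩
  calc ∑ p ∈ D, osc (F - G) (Icc p.1 p.2)
      ≤ ∑ p ∈ D, (osc F (Icc p.1 p.2) + osc G (Icc p.1 p.2)) := Finset.sum_le_sum fun p hp =>
        have hsub := (hD.2.1 p hp).2.2.2
        osc_sub_le isCompact_Icc (hFc.mono hsub) (hGc.mono hsub)
    _ = ∑ p ∈ D, osc F (Icc p.1 p.2) + ∑ p ∈ D, osc G (Icc p.1 p.2) := Finset.sum_add_distrib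
    _ < ε / 2 + ε / 2 := add_lt_add (HF D hD (hlen.trans_le (min_le_left _ _)))
        (HG D hD (hlen.trans_le (min_le_right _ _)))
    _ = ε := add_halves ε

-- Degenerate intervals may occur repeatedly in an indexed family, but they contribute nothing.
lemma ACStar.exists_sum_osc_lt (hF : ACStar a b F K) {ε : ℝ} (hε : 0 < ε) (ι : Type*) :
    ∃ δ > 0, ∀ (s : Finset ι) (l r : ι → ℝ), NonOverlapping (s : Set ι) l r →
      (∀ i ∈ s, l i ∈ K ∩ Icc a b ∧ r i ∈ K ∩ Icc a b) → ∑ i ∈ s, (r i - l i) < δ →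
      ∑ i ∈ s, osc F (Icc (l i) (r i)) < ε := by
  obtain ⟨δ, hδ, H⟩ := hF ε hε
  refine ⟨δ, hδ, fun s l r hlr hmem hlen => ?_⟩
  rcases s.eq_empty_or_nonempty with rfl | hs
  · simpa using hε
  have degenerate : ∀ i ∈ s, ∀ j ∈ s, i ≠ j → (l i, r i) = (l j, r j) → r i ≤ l i := by
    intro i hi j hj hij heq
    rw [Prod.mk.injEq] at heq
    rcases hlr.2 hi hj hij with h | h <;> linarith [hlr.1 i hi, hlr.1 j hj, heq.1, heq.2]
  have hsum_len : ∑ p ∈ s.image (fun i => (l i, r i)), (p.2 - p.1) = ∑ i ∈ s, (r i - l i) :=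
    Finset.sum_image_of_pairwise_eq_zero fun i hi j hj hij heq =>
      sub_eq_zero.2 ((degenerate i hi j hj hij heq).antisymm (hlr.1 i hi))
  have hsum_osc : ∑ p ∈ s.image (fun i => (l i, r i)), osc F (Icc p.1 p.2)
      = ∑ i ∈ s, osc F (Icc (l i) (r i)) :=
    Finset.sum_image_of_pairwise_eq_zero fun i hi j hj hij heq =>
      osc_of_subsingleton (subsingleton_Icc_of_ge (degenerate i hi j hj hij heq))
  rw [← hsum_osc]
  refine H _ ⟨hs.image _, fun p hp => ?_, fun p hp q hq hpq => ?_⟩ (hsum_len ▸ hlen)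
  · obtain ⟨i, hi, rfl⟩ := Finset.mem_image.1 hp
    exact ⟨hlr.1 i hi, (hmem i hi).1.1, (hmem i hi).2.1,
      Icc_subset_Icc (hmem i hi).1.2.1 (hmem i hi).2.2.2⟩
  · obtain ⟨i, hi, rfl⟩ := Finset.mem_image.1 (Finset.mem_coe.1 hp)
    obtain ⟨j, hj, rfl⟩ := Finset.mem_image.1 (Finset.mem_coe.1 hq)
    exact hlr.2 hi hj (by rintro rfl; exact hpq rfl)

end ACStar

section Hull

variable {a b : ℝ} {F : ℝ → ℝ} {K : Set ℝ} {l r : ℝ}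

/-- The smallest closed interval containing `K ∩ [l, r]`. If this intersection is empty, the hull
is `[0, 0]`, since `sInf ∅ = sSup ∅ = 0`; this is harmless because `osc F [0, 0] = 0`. -/
def hull (K : Set ℝ) (l r : ℝ) : Set ℝ := Icc (sInf (K ∩ Icc l r)) (sSup (K ∩ Icc l r))

lemma inter_Icc_subset_hull (K : Set ℝ) (l r : ℝ) : K ∩ Icc l r ⊆ hull K l r := fun _ hx =>
  ⟨csInf_le (bddBelow_Icc.mono inter_subset_right) hx,
    le_csSup (bddAbove_Icc.mono inter_subset_right) hx⟩

lemma osc_hull_of_eq_empty (h : K ∩ Icc l r = ∅) : osc F (hull K l r) = 0 :=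
  osc_of_subsingleton (by simp [hull, h])

lemma ACStar.exists_sum_osc_hull_lt (hF : ACStar a b F K) (hK : IsClosed K) (hKab : K ⊆ Icc a b)
    {ε : ℝ} (hε : 0 < ε) (ι : Type*) :
    ∃ δ > 0, ∀ (s : Finset ι) (l r : ι → ℝ), NonOverlapping (s : Set ι) l r →
      ∑ i ∈ s, (r i - l i) < δ → ∑ i ∈ s, osc F (hull K (l i) (r i)) < ε := by
  obtain ⟨δ, hδ, H⟩ := hF.exists_sum_osc_lt hε ι
  refine ⟨δ, hδ, fun s l r hlr hlen => ?_⟩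
  set t := s.filter fun i => (K ∩ Icc (l i) (r i)).Nonempty
  have hts : (t : Set ι) ⊆ s := Finset.coe_subset.2 (Finset.filter_subset _ _)
  have hInf : ∀ i ∈ t, sInf (K ∩ Icc (l i) (r i)) ∈ K ∩ Icc (l i) (r i) := fun i hi =>
    (isCompact_Icc.inter_left hK).sInf_mem (Finset.mem_filter.1 hi).2
  have hSup : ∀ i ∈ t, sSup (K ∩ Icc (l i) (r i)) ∈ K ∩ Icc (l i) (r i) := fun i hi =>
    (isCompact_Icc.inter_left hK).sSup_mem (Finset.mem_filter.1 hi).2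
  have hsum : ∑ i ∈ t, osc F (hull K (l i) (r i)) = ∑ i ∈ s, osc F (hull K (l i) (r i)) :=
    Finset.sum_filter_of_ne fun i _ hne => nonempty_iff_ne_empty.2 fun h =>
      hne (osc_hull_of_eq_empty h)
  rw [← hsum]
  refine H t _ _ (hlr.shrink hts (fun i hi => (hInf i hi).2.1)
    (fun i hi => (inter_Icc_subset_hull _ _ _ (hInf i hi)).2) fun i hi => (hSup i hi).2.2)
    (fun i hi => ⟨⟨(hInf i hi).1, hKab (hInf i hi).1⟩, (hSup i hi).1, hKab (hSup i hi).1⟩) ?_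
  refine lt_of_le_of_lt ?_ hlen
  calc ∑ i ∈ t, (sSup (K ∩ Icc (l i) (r i)) - sInf (K ∩ Icc (l i) (r i)))
      ≤ ∑ i ∈ t, (r i - l i) := Finset.sum_le_sum fun i hi =>
        sub_le_sub (hSup i hi).2.2 (hInf i hi).2.1
    _ ≤ ∑ i ∈ s, (r i - l i) := Finset.sum_le_sum_of_subset_of_nonneg
        (Finset.filter_subset _ _) fun i hi _ => sub_nonneg.2 (hlr.1 i hi)

lemma ACStar.exists_tsum_osc_hull_le (hF : ACStar a b F K) (hK : IsClosed K) (hKab : K ⊆ Icc a b)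
    {ε : ℝ} (hε : 0 < ε) (ι : Type*) :
    ∃ δ > 0, ∀ (s : Set ι) (l r : ι → ℝ), NonOverlapping s l r →
      volume (⋃ i ∈ s, Ioo (l i) (r i)) < ENNReal.ofReal δ →
      ∑' i : s, ENNReal.ofReal (osc F (hull K (l i) (r i))) ≤ ENNReal.ofReal ε := by
  obtain ⟨δ, hδ, H⟩ := hF.exists_sum_osc_hull_lt hK hKab hε ι
  refine ⟨δ, hδ, fun s l r hlr hvol => ENNReal.summable.tsum_le_of_sum_le fun t => ?_⟩
  have hts : ((t.map (Function.Embedding.subtype _) : Finset ι) : Set ι) ⊆ s := by simp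
  have hlr' := hlr.mono hts
  calc ∑ i ∈ t, ENNReal.ofReal (osc F (hull K (l i) (r i)))
      = ∑ i ∈ t.map (Function.Embedding.subtype _), ENNReal.ofReal (osc F (hull K (l i) (r i))) :=
        (Finset.sum_map t (Function.Embedding.subtype _)
          fun i => ENNReal.ofReal (osc F (hull K (l i) (r i)))).symm
    _ = ENNReal.ofReal (∑ i ∈ t.map (Function.Embedding.subtype _), osc F (hull K (l i) (r i))) :=
        (ENNReal.ofReal_sum_of_nonneg fun _ _ => osc_nonneg _ _).symm
    _ ≤ ENNReal.ofReal ε := by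
        refine ENNReal.ofReal_le_ofReal (H _ l r hlr' ?_).le
        rw [← ENNReal.ofReal_lt_ofReal_iff hδ, hlr'.ofReal_sum_length]
        exact (measure_mono (biUnion_subset_biUnion_left hts)).trans_lt hvol

end Hull

/-! ### Lusin's condition (N) and uniqueness of the Denjoy integral -/

section Uniqueness

variable {a b : ℝ} {f F G : ℝ → ℝ} {K E : Set ℝ}

lemma ACStar.volume_image_eq_zero (hFc : ContinuousOn F (Icc a b)) (hK : IsClosed K)
    (hKab : K ⊆ Icc a b) (hF : ACStar a b F K) (hEK : E ⊆ K) (hE : volume E = 0) :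
    volume (F '' E) = 0 := by
  refine le_antisymm (ENNReal.le_of_forall_pos_le_add fun ε hε _ => ?_) zero_le
  obtain ⟨δ, hδ, H⟩ := hF.exists_tsum_osc_hull_le hK hKab (NNReal.coe_pos.2 hε) (ℝ × ℝ)
  obtain ⟨U, hEU, hU, hUδ⟩ := E.exists_isOpen_lt_of_lt (μ := volume) (ENNReal.ofReal δ)
    (by rwa [hE, ENNReal.ofReal_pos])
  set V := U ∩ Ioo (a - 1) (b + 1)
  have hEV : E ⊆ V := fun x hx => ⟨hEU hx, by linarith [(hKab (hEK hx)).1],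
    by linarith [(hKab (hEK hx)).2]⟩
  have hVgaps : ⋃ I ∈ gaps V, Ioo I.1 I.2 = V := biUnion_gaps (hU.inter isOpen_Ioo)
    (bddBelow_Ioo.mono inter_subset_right) (bddAbove_Ioo.mono inter_subset_right)
  have hcover : F '' E ⊆ ⋃ I : gaps V, F '' (K ∩ Icc I.1.1 I.1.2) := by
    rintro _ ⟨x, hx, rfl⟩
    obtain ⟨I, hI, hxI⟩ := mem_iUnion₂.1 (hVgaps.superset (hEV hx))
    exact mem_iUnion.2 ⟨⟨I, hI⟩, x, ⟨hEK hx, Ioo_subset_Icc_self hxI⟩, rfl⟩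
  have himage : ∀ I : ℝ × ℝ,
      volume (F '' (K ∩ Icc I.1 I.2)) ≤ ENNReal.ofReal (osc F (hull K I.1 I.2)) := by
    intro I
    rcases (K ∩ Icc I.1 I.2).eq_empty_or_nonempty with h | h
    · simp [h]
    refine volume_image_le_osc isCompact_Icc (hFc.mono ?_) (inter_Icc_subset_hull _ _ _)
    exact Icc_subset_Icc (hKab ((isCompact_Icc.inter_left hK).sInf_mem h).1).1
      (hKab ((isCompact_Icc.inter_left hK).sSup_mem h).1).2
  have := (countable_gaps V).to_subtype
  calc volume (F '' E) ≤ ∑' I : gaps V, volume (F '' (K ∩ Icc I.1.1 I.1.2)) :=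
        (measure_mono hcover).trans (measure_iUnion_le _)
    _ ≤ ∑' I : gaps V, ENNReal.ofReal (osc F (hull K I.1.1 I.1.2)) :=
        ENNReal.tsum_le_tsum fun I => himage I
    _ ≤ 0 + ε := by
        rw [zero_add, ← ENNReal.ofReal_coe_nnreal]
        refine H _ _ _ (nonOverlapping_gaps V) ?_
        rw [hVgaps]
        exact (measure_mono inter_subset_left).trans_lt hUδ

lemma ACGStar.volume_image_eq_zero (hFc : ContinuousOn F (Icc a b)) (hF : ACGStar a b F K)
    (hEK : E ⊆ K) (hE : volume E = 0) : volume (F '' E) = 0 := by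
  obtain ⟨C, hC, rfl⟩ := hF
  rw [← inter_eq_left.2 hEK, inter_iUnion, image_iUnion]
  exact measure_iUnion_null fun n => (hC n).2.2.volume_image_eq_zero hFc (hC n).1 (hC n).2.1
    inter_subset_right (measure_mono_null inter_subset_left hE)

lemma ACGStar.sub (hFc : ContinuousOn F (Icc a b)) (hGc : ContinuousOn G (Icc a b))
    (hF : ACGStar a b F K) (hG : ACGStar a b G K) : ACGStar a b (F - G) K := by
  obtain ⟨C, hC, hCK⟩ := hF
  obtain ⟨C', hC', hCK'⟩ := hG
  refine ⟨fun n => C n.unpair.1 ∩ C' n.unpair.2, fun n => ⟨(hC _).1.inter (hC' _).1,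
    inter_subset_left.trans (hC _).2.1, ?_⟩, ?_⟩
  · exact ((hC _).2.2.mono inter_subset_left).sub hFc hGc ((hC' _).2.2.mono inter_subset_right)
  · rw [Set.iUnion_unpair fun m n => C m ∩ C' n]
    simp only [← inter_iUnion, ← iUnion_inter, ← hCK, ← hCK', inter_self]

-- The image of the interval is connected and null: Sard's lemma handles the points where the
-- derivative vanishes, Lusin's condition (N) the remaining null set.
lemma ACGStar.eq_of_ae_hasDerivAt_zero (hFc : ContinuousOn F (Icc a b))
    (hF : ACGStar a b F (Icc a b)) (hF' : ∀ᵐ x ∂volume.restrict (Icc a b), HasDerivAt F 0 x)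
    {x y : ℝ} (hx : x ∈ Icc a b) (hy : y ∈ Icc a b) : F x = F y := by
  set Z := {x | HasDerivAt F 0 x}
  have hZ : volume (F '' Z) = 0 :=
    addHaar_image_eq_zero_of_det_fderivWithin_eq_zero volume
      (f' := fun _ => ContinuousLinearMap.toSpanSingleton ℝ (0 : ℝ))
      (fun x (hx : HasDerivAt F 0 x) => hx.hasFDerivAt.hasFDerivWithinAt)
      fun _ _ => by simp [ContinuousLinearMap.det]
  have hnull : volume (Icc a b \ Z) = 0 := by
    rw [ae_restrict_iff' measurableSet_Icc, ae_iff] at hF'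
    exact measure_mono_null (fun x hx (h : _ → HasDerivAt F 0 x) => hx.2 (h hx.1)) hF'
  have himage : volume (F '' Icc a b) = 0 := by
    refine measure_mono_null ?_ (measure_union_null hZ
      (hF.volume_image_eq_zero hFc sdiff_subset hnull))
    rw [← image_union, union_sdiff_self]
    exact image_mono subset_union_right
  have hconn : OrdConnected (F '' Icc a b) := (isPreconnected_Icc.image _ hFc).ordConnected
  have not_lt_image {x y : ℝ} (hx : x ∈ Icc a b) (hy : y ∈ Icc a b) : ¬F x < F y := fun hlt => by
    have hIcc := measure_mono_null
      (hconn.out (mem_image_of_mem F hx) (mem_image_of_mem F hy)) himage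
    rw [Real.volume_Icc, ENNReal.ofReal_eq_zero] at hIcc
    linarith
  exact (not_lt.1 (not_lt_image hy hx)).antisymm (not_lt.1 (not_lt_image hx hy))

lemma HasDenjoyIntegralFn.unique (hF : HasDenjoyIntegralFn a b f F)
    (hG : HasDenjoyIntegralFn a b f G) {x : ℝ} (hx : x ∈ Icc a b) : F x = G x := by
  obtain ⟨hFc, hFa, hFacg, hF'⟩ := hF
  obtain ⟨hGc, hGa, hGacg, hG'⟩ := hG
  have hderiv : ∀ᵐ x ∂volume.restrict (Icc a b), HasDerivAt (F - G) 0 x := by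
    filter_upwards [hF', hG'] with y hFy hGy
    simpa using hFy.sub hGy
  have hxa := (hFacg.sub hFc hGc hGacg).eq_of_ae_hasDerivAt_zero (hFc.sub hGc) hderiv hx
    (left_mem_Icc.2 (hx.1.trans hx.2))
  rwa [Pi.sub_apply, Pi.sub_apply, hFa, hGa, sub_self, sub_eq_zero] at hxa

lemma HasDenjoyIntegralFn.denjoyIntegral_eq (hF : HasDenjoyIntegralFn a b f F) (hab : a ≤ b) :
    denjoyIntegral a b f = F b := by
  have h : DenjoyIntegrable a b f := ⟨F, hF⟩
  rw [denjoyIntegral, dif_pos h]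
  exact (Classical.choose_spec h).unique hF (right_mem_Icc.2 hab)

lemma HasDenjoyIntegralFn.restrict {c d : ℝ} (hF : HasDenjoyIntegralFn a b f F) (hac : a ≤ c)
    (hdb : d ≤ b) : HasDenjoyIntegralFn c d f fun x => F x - F c := by
  obtain ⟨hFc, -, ⟨C, hC, hCab⟩, hF'⟩ := hF
  have hsub : Icc c d ⊆ Icc a b := Icc_subset_Icc hac hdb
  refine ⟨(hFc.mono hsub).sub continuousOn_const, sub_self _,
    ⟨fun n => C n ∩ Icc c d, fun n => ⟨(hC n).1.inter isClosed_Icc, inter_subset_right, ?_⟩, ?_⟩,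
    ?_⟩
  · exact (((hC n).2.2.mono inter_subset_left).restrict hac hdb).congr fun x _ y _ => by ring
  · rw [← iUnion_inter, ← hCab, inter_eq_right.2 hsub]
  · filter_upwards [ae_mono (Measure.restrict_mono hsub le_rfl) hF'] with x hx
    exact hx.sub_const _

end Uniqueness

/-! ### Oscillation dominated by a measure -/

lemma exists_forall_measure_lt_of_absolutelyContinuous {X : Type*} [MeasurableSpace X]
    {μ ν : Measure X} [SigmaFinite μ] [IsFiniteMeasure ν] (h : ν ≪ μ) {ε : ℝ≥0∞} (hε : ε ≠ 0) :
    ∃ δ > (0 : ℝ), ∀ s, μ s < ENNReal.ofReal δ → ν s < ε := by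
  have hfin : ∫⁻ x, ν.rnDeriv μ x ∂μ ≠ ∞ := (Measure.lintegral_rnDeriv_lt_top ν μ).ne
  obtain ⟨δ, hδ, H⟩ := exists_pos_setLIntegral_lt_of_measure_lt hfin hε
  obtain ⟨δ', hδ', hlt⟩ := ENNReal.lt_iff_exists_nnreal_btwn.1 hδ
  refine ⟨δ', by exact_mod_cast hδ', fun s hs => ?_⟩
  rw [ENNReal.ofReal_coe_nnreal] at hs
  simpa only [← withDensity_apply', Measure.withDensity_rnDeriv_eq ν μ h] using H s (hs.trans hlt)

section OscDominatedOn

variable {a b : ℝ} {F : ℝ → ℝ} {E K : Set ℝ} {ν : Measure ℝ}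

/-- The oscillation of `F` on an interval with endpoints in `S` is at most the `ν`-measure of the
interior. If `ν` is finite and `ν ≪ volume`, this is a quantitative form of `F ∈ AC_*(S)`. -/
def OscDominatedOn (F : ℝ → ℝ) (S : Set ℝ) (ν : Measure ℝ) : Prop :=
  ∀ p ∈ S, ∀ q ∈ S, p ≤ q → ENNReal.ofReal (osc F (Icc p q)) ≤ ν (Ioo p q)

lemma ofReal_osc_le_add_measure {p q : ℝ} (hE : IsClosed E) (hF : ContinuousOn F (Icc p q))
    (hpE : ∀ r ∈ E ∩ Icc p q, Disjoint (Ioo p r) E →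
      ENNReal.ofReal (osc F (Icc p r)) ≤ ν (Ioo p r))
    (hqE : ∀ r ∈ E ∩ Icc p q, Disjoint (Ioo r q) E →
      ENNReal.ofReal (osc F (Icc r q)) ≤ ν (Ioo r q))
    (hne : (E ∩ Icc p q).Nonempty) :
    ENNReal.ofReal (osc F (Icc p q)) ≤ ENNReal.ofReal (osc F (hull E p q)) + ν (Ioo p q) := by
  have hp' := (isCompact_Icc.inter_left hE).sInf_mem hne
  have hq' := (isCompact_Icc.inter_left hE).sSup_mem hne
  rw [hull]
  set p' := sInf (E ∩ Icc p q)
  set q' := sSup (E ∩ Icc p q)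
  have hp'q' : p' ≤ q' := (inter_Icc_subset_hull _ _ _ hp').2
  have hgapl : Disjoint (Ioo p p') E := disjoint_left.2 fun x hx hxE => hx.2.not_ge
    (inter_Icc_subset_hull _ _ _ ⟨hxE, hx.1.le, hx.2.le.trans hp'.2.2⟩).1
  have hgapr : Disjoint (Ioo q' q) E := disjoint_left.2 fun x hx hxE => hx.1.not_ge
    (inter_Icc_subset_hull _ _ _ ⟨hxE, hq'.2.1.trans hx.1.le, hx.2.le⟩).2
  have hosc : osc F (Icc p q) ≤ osc F (Icc p p') + (osc F (Icc p' q') + osc F (Icc q' q)) :=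
    (osc_Icc_le_add hF hp'.2.1 hp'.2.2).trans (add_le_add_right
      (osc_Icc_le_add (hF.mono (Icc_subset_Icc_left hp'.2.1)) hp'q' hq'.2.2) _)
  have hν : ν (Ioo p p') + ν (Ioo q' q) ≤ ν (Ioo p q) := by
    rw [← measure_union (disjoint_left.2 fun x hx hx' =>
      (hx.2.trans_le hp'q').not_gt hx'.1) measurableSet_Ioo]
    exact measure_mono (union_subset (Ioo_subset_Ioo_right hp'.2.2) (Ioo_subset_Ioo_left hq'.2.1))
  calc ENNReal.ofReal (osc F (Icc p q))
      ≤ ENNReal.ofReal (osc F (Icc p p')) + (ENNReal.ofReal (osc F (Icc p' q')) +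
          ENNReal.ofReal (osc F (Icc q' q))) := by
        rw [← ENNReal.ofReal_add (osc_nonneg _ _) (osc_nonneg _ _), ← ENNReal.ofReal_add
          (osc_nonneg _ _) (add_nonneg (osc_nonneg _ _) (osc_nonneg _ _))]
        exact ENNReal.ofReal_le_ofReal hosc
    _ ≤ ν (Ioo p p') + (ENNReal.ofReal (osc F (Icc p' q')) + ν (Ioo q' q)) := by
        gcongr
        exacts [hpE p' hp' hgapl, hqE q' hq' hgapr]
    _ = ENNReal.ofReal (osc F (Icc p' q')) + (ν (Ioo p p') + ν (Ioo q' q)) := by ring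
    _ ≤ _ := by gcongr

lemma ACStar.of_osc_le_measure [IsFiniteMeasure ν] (hF : ACStar a b F E)
    (hFc : ContinuousOn F (Icc a b)) (hE : IsClosed E) (hEab : E ⊆ Icc a b) (hEK : E ⊆ K)
    (hν : ν ≪ volume) (hosc : ∀ p ∈ K ∩ Icc a b, ∀ q ∈ K ∩ Icc a b, p ≤ q → Disjoint (Ioo p q) E →
      ENNReal.ofReal (osc F (Icc p q)) ≤ ν (Ioo p q)) : ACStar a b F K := by
  intro ε hε
  obtain ⟨δ, hδ, HF⟩ := hF.exists_sum_osc_hull_lt hE hEab (half_pos hε) (ℝ × ℝ)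
  obtain ⟨δ', hδ', Hν⟩ := exists_forall_measure_lt_of_absolutelyContinuous hν
    (ENNReal.ofReal_pos.2 (half_pos hε)).ne'
  refine ⟨min δ δ', lt_min hδ hδ', fun D hD hlen => ?_⟩
  have osc_le : ∀ p ∈ D, ENNReal.ofReal (osc F (Icc p.1 p.2)) ≤
      ENNReal.ofReal (osc F (hull E p.1 p.2)) + ν (Ioo p.1 p.2) := by
    intro p hp
    obtain ⟨hle, h1, h2, hsub⟩ := hD.2.1 p hp
    rcases (E ∩ Icc p.1 p.2).eq_empty_or_nonempty with hempty | hne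
    · refine le_add_left (hosc _ ⟨h1, hsub (left_mem_Icc.2 hle)⟩ _
        ⟨h2, hsub (right_mem_Icc.2 hle)⟩ hle ?_)
      exact (disjoint_iff_inter_eq_empty.2 hempty).symm.mono_left Ioo_subset_Icc_self
    · refine ofReal_osc_le_add_measure hE (hFc.mono hsub) (fun r hr => ?_) (fun r hr => ?_) hne
      · exact hosc _ ⟨h1, hsub (left_mem_Icc.2 hle)⟩ r ⟨hEK hr.1, hEab hr.1⟩ hr.2.1
      · exact hosc r ⟨hEK hr.1, hEab hr.1⟩ _ ⟨h2, hsub (right_mem_Icc.2 hle)⟩ hr.2.2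
  have hνlt : ν (⋃ p ∈ D, Ioo p.1 p.2) < ENNReal.ofReal (ε / 2) := by
    refine Hν _ ?_
    rw [← hD.nonOverlapping.ofReal_sum_length, ENNReal.ofReal_lt_ofReal_iff hδ']
    exact hlen.trans_le (min_le_right _ _)
  rw [← ENNReal.ofReal_lt_ofReal_iff hε, ENNReal.ofReal_sum_of_nonneg fun _ _ => osc_nonneg _ _]
  calc ∑ p ∈ D, ENNReal.ofReal (osc F (Icc p.1 p.2))
      ≤ ∑ p ∈ D, (ENNReal.ofReal (osc F (hull E p.1 p.2)) + ν (Ioo p.1 p.2)) :=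
        Finset.sum_le_sum osc_le
    _ = ENNReal.ofReal (∑ p ∈ D, osc F (hull E p.1 p.2)) + ν (⋃ p ∈ D, Ioo p.1 p.2) := by
        rw [Finset.sum_add_distrib, hD.nonOverlapping.sum_measure_Ioo,
          ENNReal.ofReal_sum_of_nonneg fun _ _ => osc_nonneg _ _]
    _ < ENNReal.ofReal (ε / 2) + ENNReal.ofReal (ε / 2) := ENNReal.add_lt_add
        ((ENNReal.ofReal_lt_ofReal_iff (half_pos hε)).2
          (HF D _ _ hD.nonOverlapping (hlen.trans_le (min_le_left _ _)))) hνlt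
    _ = ENNReal.ofReal ε := by
        rw [← ENNReal.ofReal_add (half_pos hε).le (half_pos hε).le, add_halves]

lemma OscDominatedOn.acStar [IsFiniteMeasure ν] (h : OscDominatedOn F K ν) (hν : ν ≪ volume)
    (hFc : ContinuousOn F (Icc a b)) : ACStar a b F K :=
  have hempty : ACStar a b F ∅ := fun _ _ =>
    ⟨1, one_pos, fun _ hD => absurd (hD.2.1 _ hD.1.choose_spec).2.1 (notMem_empty _)⟩
  hempty.of_osc_le_measure hFc isClosed_empty (empty_subset _) (empty_subset _) hν
    fun p hp q hq hle _ => h p hp.1 q hq.1 hle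

end OscDominatedOn

/-! ### Lebesgue integrable functions -/

section Integrable

variable {a b : ℝ} {f F : ℝ → ℝ}

lemma oscDominatedOn_primitive (hf : IntegrableOn f (Icc a b)) :
    OscDominatedOn (fun x => ∫ t in a..x, f t) (Icc a b)
      ((volume.restrict (Icc a b)).withDensity fun x => ‖f x‖ₑ) := by
  intro p hp q hq _
  have hsub : Ioo p q ⊆ Icc a b := Ioo_subset_Icc_self.trans (Icc_subset_Icc hp.1 hq.2)
  have hint : ∀ x ∈ Icc a b, IntervalIntegrable f volume a x := fun x hx =>
    (intervalIntegrable_iff_integrableOn_Icc_of_le hx.1).2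
      (hf.mono_set (Icc_subset_Icc_right hx.2))
  rw [withDensity_apply _ measurableSet_Ioo, Measure.restrict_restrict measurableSet_Ioo,
    inter_eq_left.2 hsub]
  refine ENNReal.ofReal_le_of_le_toReal (osc_le ENNReal.toReal_nonneg ?_)
  have of_le : ∀ x ∈ Icc p q, ∀ y ∈ Icc p q, x ≤ y →
      |(∫ t in a..y, f t) - ∫ t in a..x, f t| ≤ (∫⁻ x in Ioo p q, ‖f x‖ₑ).toReal := by
    intro x hx y hy hxy
    have hxab := Icc_subset_Icc hp.1 hq.2 hx
    have hyab := Icc_subset_Icc hp.1 hq.2 hy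
    rw [intervalIntegral.integral_interval_sub_left (hint y hyab) (hint x hxab),
      intervalIntegral.integral_of_le hxy, integral_Ioc_eq_integral_Ioo, ← Real.norm_eq_abs,
      ← toReal_enorm]
    refine ENNReal.toReal_mono (hf.mono_set hsub).2.ne ?_
    exact (enorm_integral_le_lintegral_enorm _).trans
      (lintegral_mono_set (Ioo_subset_Ioo hx.1 hy.2))
  intro x hx y hy
  rcases le_total x y with hxy | hyx
  · rw [abs_sub_comm]
    exact of_le x hx y hy hxy
  · exact of_le y hy x hx hyx

lemma acStar_primitive (hab : a ≤ b) (hf : IntegrableOn f (Icc a b)) :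
    ACStar a b (fun x => ∫ t in a..x, f t) (Icc a b) := by
  have := isFiniteMeasure_withDensity hf.2.ne
  have hcont := intervalIntegral.continuousOn_primitive_interval (uIcc_of_le hab ▸ hf)
  exact (oscDominatedOn_primitive hf).acStar
    ((withDensity_absolutelyContinuous _ _).trans Measure.restrict_le_self.absolutelyContinuous)
    (uIcc_of_le hab ▸ hcont)

lemma hasDenjoyIntegralFn_primitive (hab : a ≤ b) (hf : IntegrableOn f (Icc a b)) :
    HasDenjoyIntegralFn a b f fun x => ∫ t in a..x, f t := by
  have hcont := intervalIntegral.continuousOn_primitive_interval (uIcc_of_le hab ▸ hf)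
  refine ⟨uIcc_of_le hab ▸ hcont, by simp, ⟨fun _ => Icc a b, fun _ => ⟨isClosed_Icc,
    Subset.rfl, acStar_primitive hab hf⟩, (iUnion_const _).symm⟩, ?_⟩
  have hderiv := ((intervalIntegrable_iff_integrableOn_Icc_of_le hab).2 hf).ae_hasDerivAt_integral
  rw [ae_restrict_iff' measurableSet_Icc]
  filter_upwards [hderiv] with x hx hxab
  exact hx (uIcc_of_le hab ▸ hxab) a left_mem_uIcc

lemma HasDenjoyIntegralFn.acStar (hF : HasDenjoyIntegralFn a b f F) (hab : a ≤ b)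
    (hf : IntegrableOn f (Icc a b)) : ACStar a b F (Icc a b) :=
  have heq {x : ℝ} (hx : x ∈ Icc a b) := hF.unique (hasDenjoyIntegralFn_primitive hab hf) hx
  (acStar_primitive hab hf).congr fun x hx y hy => by rw [heq hx, heq hy]

end Integrable

/-! ### Local derivatives -/

section LocalDeriv

variable {P Q : Set ℝ → Prop} {K L O : Set ℝ} {x : ℝ}

/-- The points of `K` near which `K` does not have the property `P`. Both `D_f(K)` and `D_F(K)` are
of this form. -/
def localDeriv (P : Set ℝ → Prop) (K : Set ℝ) : Set ℝ :=
  {x ∈ K | ∀ c d, c < x → x < d → ¬P (Icc c d ∩ K)}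

lemma Df_eq_localDeriv (f : ℝ → ℝ) (K : Set ℝ) : Df f K = localDeriv (IntegrableOn f) K := rfl

lemma DF_eq_localDeriv (a b : ℝ) (F : ℝ → ℝ) (K : Set ℝ) :
    DF a b F K = localDeriv (ACStar a b F) K := rfl

lemma localDeriv_subset (P : Set ℝ → Prop) (K : Set ℝ) : localDeriv P K ⊆ K := sep_subset _ _

lemma exists_Icc_of_notMem_localDeriv (hx : x ∈ K) (h : x ∉ localDeriv P K) :
    ∃ c d, x ∈ Ioo c d ∧ P (Icc c d ∩ K) := by
  by_contra! hP
  exact h ⟨hx, fun c d hcx hxd => hP c d ⟨hcx, hxd⟩⟩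

lemma isClosed_localDeriv (P : Set ℝ → Prop) (hK : IsClosed K) : IsClosed (localDeriv P K) := by
  refine isClosed_of_closure_subset fun x hx => ?_
  have hxK : x ∈ K := closure_minimal (localDeriv_subset P K) hK hx
  by_contra hxD
  obtain ⟨c, d, hxcd, hP⟩ := exists_Icc_of_notMem_localDeriv hxK hxD
  obtain ⟨y, hy, hyD⟩ := mem_closure_iff.1 hx _ isOpen_Ioo hxcd
  exact hyD.2 c d hy.1 hy.2 hP

lemma localDeriv_eq_empty (h : ∀ s ⊆ K, P s) : localDeriv P K = ∅ :=
  eq_empty_of_forall_notMem fun x hx => hx.2 (x - 1) (x + 1) (sub_one_lt x) (lt_add_one x)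
    (h _ inter_subset_right)

lemma localDeriv_inter_subset (hO : IsOpen O) (hKL : K ∩ O ⊆ L)
    (hQP : ∀ s t, s ⊆ O → s ⊆ t → Q t → P s) : localDeriv P K ∩ O ⊆ localDeriv Q L := by
  rintro x ⟨⟨hxK, hx⟩, hxO⟩
  refine ⟨hKL ⟨hxK, hxO⟩, fun c d hcx hxd hQ => ?_⟩
  obtain ⟨c', d', -, hcd', hsub⟩ := exists_Icc_mem_subset_of_mem_nhds
    ((hO.inter isOpen_Ioo).mem_nhds ⟨hxO, hcx, hxd⟩)
  obtain ⟨hcx', hxd'⟩ := Icc_mem_nhds_iff.1 hcd'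
  exact hx c' d' hcx' hxd' (hQP _ (Icc c d ∩ L) (fun y hy => (hsub hy.1).1)
    (fun y hy => ⟨Ioo_subset_Icc_self (hsub hy.1).2, hKL ⟨hy.2, (hsub hy.1).1⟩⟩) hQ)

end LocalDeriv

section LocalToGlobal

variable {a b : ℝ} {f F : ℝ → ℝ} {K S T : Set ℝ}

lemma integrableOn_of_Df_eq_empty (hK : IsCompact K) (h : Df f K = ∅) : IntegrableOn f K := by
  refine LocallyIntegrableOn.integrableOn_isCompact (fun x hx => ?_) hK
  obtain ⟨c, d, hxcd, hint⟩ := exists_Icc_of_notMem_localDeriv hx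
    (Df_eq_localDeriv f K ▸ h ▸ notMem_empty x)
  exact ⟨Icc c d ∩ K, inter_mem (mem_nhdsWithin_of_mem_nhds (Icc_mem_nhds hxcd.1 hxcd.2))
    self_mem_nhdsWithin, hint⟩

/-- A weakening of `F ∈ AC_*(K)` in which only the intervals whose left endpoint lies in `S` are
counted. It is additive in `S`, hence can be checked locally on a compact set. -/
def ACStarFrom (a b : ℝ) (F : ℝ → ℝ) (K S : Set ℝ) : Prop :=
  ∀ ε > 0, ∃ δ > 0, ∀ D, IsPrePartition a b K D → ∑ p ∈ D, (p.2 - p.1) < δ →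
    ∑ p ∈ D with p.1 ∈ S, osc F (Icc p.1 p.2) < ε

lemma ACStarFrom.acStar (h : ACStarFrom a b F K K) : ACStar a b F K := by
  intro ε hε
  obtain ⟨δ, hδ, H⟩ := h ε hε
  refine ⟨δ, hδ, fun D hD hlen => ?_⟩
  rw [← Finset.filter_true_of_mem fun p hp => (hD.2.1 p hp).2.1]
  exact H D hD hlen

lemma acStarFrom_empty (a b : ℝ) (F : ℝ → ℝ) (K : Set ℝ) : ACStarFrom a b F K ∅ :=
  fun ε hε => ⟨1, one_pos, fun _ _ _ => by simpa using hε⟩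

lemma ACStarFrom.mono (hT : ACStarFrom a b F K T) (hST : S ⊆ T) : ACStarFrom a b F K S := by
  intro ε hε
  obtain ⟨δ, hδ, H⟩ := hT ε hε
  refine ⟨δ, hδ, fun D hD hlen => lt_of_le_of_lt ?_ (H D hD hlen)⟩
  exact Finset.sum_le_sum_of_subset_of_nonneg (Finset.monotone_filter_right _ fun _ _ h => hST h)
    fun _ _ _ => osc_nonneg _ _

lemma ACStarFrom.union (hS : ACStarFrom a b F K S) (hT : ACStarFrom a b F K T) :
    ACStarFrom a b F K (S ∪ T) := by
  intro ε hε
  obtain ⟨δ, hδ, HS⟩ := hS (ε / 2) (half_pos hε)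
  obtain ⟨δ', hδ', HT⟩ := hT (ε / 2) (half_pos hε)
  refine ⟨min δ δ', lt_min hδ hδ', fun D hD hlen => ?_⟩
  have hsumS := HS D hD (hlen.trans_le (min_le_left _ _))
  have hsumT := HT D hD (hlen.trans_le (min_le_right _ _))
  have hsum := Finset.sum_union_inter (s₁ := D.filter (·.1 ∈ S)) (s₂ := D.filter (·.1 ∈ T))
    (f := fun p => osc F (Icc p.1 p.2))
  have hinter := Finset.sum_nonneg (s := D.filter (·.1 ∈ S) ∩ D.filter (·.1 ∈ T))
    fun p _ => osc_nonneg F (Icc p.1 p.2)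
  simp only [mem_union, Finset.filter_or]
  linarith

-- The intervals of a partition finer than the length of `(y, d)` that start in `[c, y]` end before
-- `d`, which is why counting by left endpoints suffices.
lemma ACStar.acStarFrom {c y d : ℝ} (hF : ACStar a b F (Icc c d ∩ K)) (hyd : y < d)
    (hS : S ⊆ Icc c y) : ACStarFrom a b F K S := by
  intro ε hε
  obtain ⟨δ, hδ, H⟩ := hF.exists_sum_osc_lt hε (ℝ × ℝ)
  refine ⟨min δ (d - y), lt_min hδ (sub_pos.2 hyd), fun D hD hlen => ?_⟩
  have nonneg : ∀ p ∈ D, 0 ≤ p.2 - p.1 := fun p hp => sub_nonneg.2 (hD.2.1 p hp).1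
  refine H _ _ _ (hD.nonOverlapping.mono (Finset.coe_subset.2 (Finset.filter_subset _ _)))
    (fun p hp => ?_) ((Finset.sum_le_sum_of_subset_of_nonneg (Finset.filter_subset _ _)
      fun p hp _ => nonneg p hp).trans_lt (hlen.trans_le (min_le_left _ _)))
  obtain ⟨hpD, hpS⟩ := Finset.mem_filter.1 hp
  obtain ⟨hcp, hpy⟩ := hS hpS
  obtain ⟨hle, h1, h2, hsub⟩ := hD.2.1 p hpD
  have hpd : p.2 < d := by
    linarith [Finset.single_le_sum nonneg hpD, min_le_right δ (d - y)]
  exact ⟨⟨⟨⟨hcp, by linarith⟩, h1⟩, hsub (left_mem_Icc.2 hle)⟩,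
    ⟨⟨by linarith, hpd.le⟩, h2⟩, hsub (right_mem_Icc.2 hle)⟩

lemma acStar_of_DF_eq_empty (hK : IsCompact K) (h : DF a b F K = ∅) : ACStar a b F K := by
  refine (hK.induction_on (p := ACStarFrom a b F K) (acStarFrom_empty a b F K)
    (fun _ _ hST hT => hT.mono hST) (fun _ _ => .union) fun x hx => ?_).acStar
  obtain ⟨c, d, ⟨hcx, hxd⟩, hac⟩ := exists_Icc_of_notMem_localDeriv hx
    (DF_eq_localDeriv a b F K ▸ h ▸ notMem_empty x)
  obtain ⟨y, hxy, hyd⟩ := exists_between hxd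
  exact ⟨Ioo c y, mem_nhdsWithin_of_mem_nhds (Ioo_mem_nhds hcx hxy),
    hac.acStarFrom hyd Ioo_subset_Icc_self⟩

lemma DfF_eq_empty_iff (hK : IsCompact K) :
    DfF a b f F K = ∅ ↔ IntegrableOn f K ∧ ACStar a b F K := by
  rw [DfF, union_empty_iff]
  exact and_congr
    ⟨integrableOn_of_Df_eq_empty hK, fun h => localDeriv_eq_empty fun _ hs => h.mono_set hs⟩
    ⟨acStar_of_DF_eq_empty hK, fun h => localDeriv_eq_empty fun _ hs => h.mono hs⟩

lemma acStar_singleton (a b : ℝ) (F : ℝ → ℝ) (z : ℝ) : ACStar a b F {z} := fun ε hε =>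
  ⟨1, one_pos, fun D hD _ => by
    rwa [Finset.sum_eq_zero fun p hp => osc_of_subsingleton (subsingleton_Icc_of_ge
      ((hD.2.1 p hp).2.2.1.trans (hD.2.1 p hp).2.1.symm).le)]⟩

lemma acStar_insert (hF : ACStar a b F K) (hK : IsCompact K) (z : ℝ) :
    ACStar a b F (insert z K) := by
  by_cases hz : z ∈ K
  · rwa [insert_eq_of_mem hz]
  refine acStar_of_DF_eq_empty (hK.insert z) (eq_empty_of_forall_notMem fun x hx => ?_)
  by_cases hxz : x = z
  · have hmem : x ∈ localDeriv (ACStar a b F) {z} := localDeriv_inter_subset (O := Kᶜ)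
      hK.isClosed.isOpen_compl (by grind) (fun s t _ hst => (·.mono hst)) ⟨hx, hxz ▸ hz⟩
    rwa [localDeriv_eq_empty fun s hs => (acStar_singleton a b F z).mono hs] at hmem
  · have hmem : x ∈ localDeriv (ACStar a b F) K := localDeriv_inter_subset (O := {z}ᶜ)
      isOpen_compl_singleton (by grind) (fun s t _ hst => (·.mono hst)) ⟨hx, hxz⟩
    rwa [localDeriv_eq_empty fun s hs => hF.mono hs] at hmem

end LocalToGlobal

/-! ### Refining a set so that it accumulates at the endpoints of its gaps -/

lemma exists_measure_Ioo_ge {ι : Type*} {l r : ι → ℝ} (hlr : ∀ i, l i < r i) (w : ι → ℝ≥0∞) :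
    ∃ ν : Measure ℝ, ν ≪ volume ∧ ν univ = ∑' i, w i ∧ ∀ i, w i ≤ ν (Ioo (l i) (r i)) := by
  have hprob (i : ι) : IsProbabilityMeasure (ProbabilityTheory.cond volume (Ioo (l i) (r i))) :=
    ProbabilityTheory.cond_isProbabilityMeasure_of_finite (by simpa using hlr i) (by simp)
  refine ⟨Measure.sum fun i => w i • ProbabilityTheory.cond volume (Ioo (l i) (r i)),
    Measure.absolutelyContinuous_sum_left fun i =>
      Measure.AbsolutelyContinuous.smul_left ProbabilityTheory.cond_absolutelyContinuous _,
    by simp [Measure.sum_apply], fun i => le_trans ?_ (Measure.le_sum _ i _)⟩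
  rw [Measure.smul_apply, ProbabilityTheory.cond_apply_self (by simpa using hlr i) (by simp),
    smul_eq_mul, mul_one]

section Refinement

variable {a b c d : ℝ} {F : ℝ → ℝ} {η : ℝ≥0∞}

lemma tendsto_osc_Icc (hF : ContinuousWithinAt F (Ici c) c) :
    Tendsto (fun x => osc F (Icc c x)) (𝓝[>] c) (𝓝 0) := by
  have hIcc : Tendsto (Icc c) (𝓝[>] c) (𝓝[≥] c).smallSets :=
    (tendsto_const_nhdsWithin self_mem_Ici).Icc (nhdsWithin_mono c Ioi_subset_Ici_self)
  refine tendsto_order.2 ⟨fun ε hε => Eventually.of_forall fun x => hε.trans_le (osc_nonneg _ _),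
    fun ε hε => ?_⟩
  have hnear : ∀ᶠ y in 𝓝[≥] c, |F y - F c| < ε / 3 :=
    Metric.tendsto_nhds.1 hF _ (div_pos hε three_pos)
  filter_upwards [hIcc.eventually hnear.smallSets] with x hx
  refine (osc_le (C := ε / 3 + ε / 3) (by positivity) fun y hy z hz => ?_).trans_lt (by linarith)
  calc |F y - F z| ≤ |F y - F c| + |F c - F z| := abs_sub_le _ _ _
    _ ≤ ε / 3 + ε / 3 := add_le_add (hx y hy).le (abs_sub_comm (F z) (F c) ▸ (hx z hz).le)

lemma exists_seq_tsum_osc_le (hcd : c < d) (hF : ContinuousOn F (Icc c d)) (hη : η ≠ 0) :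
    ∃ x : ℕ → ℝ, StrictAnti x ∧ x 0 = d ∧ (∀ k, c < x k) ∧ Tendsto x atTop (𝓝 c) ∧
      ∑' k, ENNReal.ofReal (osc F (Icc c (x k))) ≤ ENNReal.ofReal (osc F (Icc c d)) + η := by
  obtain ⟨u, hu, hucd, hulim⟩ := exists_seq_strictAnti_tendsto' hcd
  obtain ⟨w, hw, hwη⟩ := ENNReal.exists_pos_sum_of_countable' hη ℕ
  have hzero : Tendsto (fun k => ENNReal.ofReal (osc F (Icc c (u k)))) atTop (𝓝 0) := by
    rw [← ENNReal.ofReal_zero]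
    refine ENNReal.tendsto_ofReal ((tendsto_osc_Icc ?_).comp
      (tendsto_nhdsWithin_iff.2 ⟨hulim, Eventually.of_forall fun k => (hucd k).1⟩))
    exact (hF c (left_mem_Icc.2 hcd.le)).mono_of_mem_nhdsWithin (Icc_mem_nhdsGE hcd)
  have hsmall : ∀ n, ∀ᶠ k in atTop, ENNReal.ofReal (osc F (Icc c (u k))) ≤ w n := fun n =>
    hzero.eventually_le_const (hw n)
  obtain ⟨φ, hφ, hosc⟩ := extraction_forall_of_eventually hsmall
  refine ⟨fun k => Nat.casesOn k d (u ∘ φ), strictAnti_nat_of_succ_lt ?_, rfl, ?_,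
    ?_, ?_⟩
  · rintro (_ | k)
    exacts [(hucd _).2, hu (hφ k.lt_succ_self)]
  · rintro (_ | k)
    exacts [hcd, (hucd _).1]
  · rw [← tendsto_add_atTop_iff_nat 1]
    exact hulim.comp hφ.tendsto_atTop
  · rw [tsum_eq_zero_add' ENNReal.summable]
    exact add_le_add_right ((ENNReal.tsum_le_tsum hosc).trans hwη.le) _

lemma exists_oscDominatedOn_left (hcd : c < d) (hF : ContinuousOn F (Icc c d)) (hη : η ≠ 0) :
    ∃ S ν, IsClosed S ∧ S.Countable ∧ S ⊆ Icc c d ∧ c ∈ S ∧ d ∈ S ∧ (∃ᶠ y in 𝓝[>] c, y ∈ S) ∧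
      ν ≪ volume ∧ ν univ ≤ ENNReal.ofReal (osc F (Icc c d)) + η ∧ OscDominatedOn F S ν := by
  obtain ⟨x, hx, hx0, hcx, hxc, hsum⟩ := exists_seq_tsum_osc_le hcd hF hη
  have hxd : ∀ k, x k ≤ d := fun k => hx0 ▸ hx.antitone k.zero_le
  obtain ⟨ν, hν, hνuniv, hνge⟩ := exists_measure_Ioo_ge (fun k => hx k.lt_succ_self)
    fun k => ENNReal.ofReal (osc F (Icc c (x k)))
  have hsub : insert c (range x) ⊆ Icc c d :=
    insert_subset ⟨le_rfl, hcd.le⟩ (range_subset_iff.2 fun k => ⟨(hcx k).le, hxd k⟩)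
  refine ⟨insert c (range x), ν, hxc.isCompact_insert_range.isClosed,
    (countable_range x).insert c, hsub, mem_insert _ _, mem_insert_of_mem _ ⟨0, hx0⟩,
    (tendsto_nhdsWithin_iff.2 ⟨hxc, Eventually.of_forall hcx⟩).frequently
      (Frequently.of_forall fun k => mem_insert_of_mem _ (mem_range_self k)), hν,
    hνuniv.trans_le hsum, fun p hp q hq hpq => ?_⟩
  rcases hpq.eq_or_lt with rfl | hpq
  · simp [osc_of_subsingleton]
  obtain ⟨i, rfl⟩ : q ∈ range x := hq.resolve_left fun h => (hsub hp).1.not_gt (h ▸ hpq)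
  have hpx : p ≤ x (i + 1) := by
    rcases hp with rfl | ⟨j, rfl⟩
    exacts [(hcx _).le, hx.antitone (hx.lt_iff_gt.1 hpq)]
  calc ENNReal.ofReal (osc F (Icc p (x i)))
      ≤ ENNReal.ofReal (osc F (Icc c (x i))) := ENNReal.ofReal_le_ofReal <|
        osc_mono isCompact_Icc (hF.mono (Icc_subset_Icc_right (hxd i)))
          (Icc_subset_Icc_left (hsub hp).1)
    _ ≤ ν (Ioo (x (i + 1)) (x i)) := hνge i
    _ ≤ ν (Ioo p (x i)) := measure_mono (Ioo_subset_Ioo_left hpx)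

lemma osc_comp_neg (F : ℝ → ℝ) (J : Set ℝ) : osc (fun x => F (-x)) J = osc F (-J) := by
  have hset : {d : ℝ | ∃ x ∈ J, ∃ y ∈ J, d = |F (-x) - F (-y)|} =
      {d : ℝ | ∃ x ∈ -J, ∃ y ∈ -J, d = |F x - F y|} := by
    ext d
    constructor <;> rintro ⟨x, hx, y, hy, rfl⟩ <;> exact ⟨-x, by simpa, -y, by simpa, by simp⟩
  rw [osc, osc, hset]

lemma exists_oscDominatedOn_right (hcd : c < d) (hF : ContinuousOn F (Icc c d)) (hη : η ≠ 0) :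
    ∃ S ν, IsClosed S ∧ S.Countable ∧ S ⊆ Icc c d ∧ c ∈ S ∧ d ∈ S ∧ (∃ᶠ y in 𝓝[<] d, y ∈ S) ∧
      ν ≪ volume ∧ ν univ ≤ ENNReal.ofReal (osc F (Icc c d)) + η ∧ OscDominatedOn F S ν := by
  have hneg : -Icc c d = Icc (-d) (-c) := by simp
  obtain ⟨S, ν, hS, hScount, hSsub, hdS, hcS, hacc, hν, hνuniv, hosc⟩ :=
    exists_oscDominatedOn_left (F := fun x => F (-x)) (neg_lt_neg hcd)
      (hF.comp continuousOn_neg fun x hx => by rwa [← hneg] at hx) hη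
  refine ⟨-S, ν.map (fun x => -x), hS.neg,
    hScount.preimage neg_injective, ?_, by simpa, by simpa, ?_,
    ?_, ?_, fun p hp q hq hpq => ?_⟩
  · rw [← neg_neg (Icc c d), hneg]
    exact Set.neg_subset_neg.2 hSsub
  · exact tendsto_neg_nhdsGT_neg.frequently (hacc.mono fun y hy => by simpa)
  · rw [← Measure.map_neg_eq_self (volume : Measure ℝ)]; exact hν.map measurable_neg
  · rw [Measure.map_apply measurable_neg .univ, preimage_univ]
    simpa [osc_comp_neg] using hνuniv
  · have h := hosc (-q) hq (-p) hp (neg_le_neg hpq)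
    rw [osc_comp_neg] at h
    rw [Measure.map_apply measurable_neg measurableSet_Ioo]
    simpa using h

lemma OscDominatedOn.union {S T : Set ℝ} {ν ν' : Measure ℝ} {m : ℝ} (hS : OscDominatedOn F S ν)
    (hT : OscDominatedOn F T ν') (hFc : ContinuousOn F (Icc c d)) (hSsub : S ⊆ Icc c m)
    (hTsub : T ⊆ Icc m d) (hmS : m ∈ S) (hmT : m ∈ T) : OscDominatedOn F (S ∪ T) (ν + ν') := by
  intro p hp q hq hpq
  rw [Measure.add_apply]
  rcases hp with hp | hp <;> rcases hq with hq | hq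
  · exact (hS p hp q hq hpq).trans le_self_add
  · have hpm := (hSsub hp).2
    have hmq := (hTsub hq).1
    have hosc := osc_Icc_le_add (hFc.mono (Icc_subset_Icc (hSsub hp).1 (hTsub hq).2)) hpm hmq
    calc ENNReal.ofReal (osc F (Icc p q))
        ≤ ENNReal.ofReal (osc F (Icc p m)) + ENNReal.ofReal (osc F (Icc m q)) := by
          rw [← ENNReal.ofReal_add (osc_nonneg _ _) (osc_nonneg _ _)]
          exact ENNReal.ofReal_le_ofReal hosc
      _ ≤ ν (Ioo p m) + ν' (Ioo m q) := add_le_add (hS p hp m hmS hpm) (hT m hmT q hq hmq)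
      _ ≤ ν (Ioo p q) + ν' (Ioo p q) := by gcongr
  · have heq : p = q := hpq.antisymm ((hSsub hq).2.trans (hTsub hp).1)
    simp [heq, osc_of_subsingleton]
  · exact (hT p hp q hq hpq).trans le_add_self

lemma exists_oscDominatedOn (hcd : c < d) (hF : ContinuousOn F (Icc c d)) (hη : η ≠ 0) :
    ∃ S ν, IsClosed S ∧ S.Countable ∧ c ∈ S ∧ d ∈ S ∧ (∃ᶠ y in 𝓝[>] c, y ∈ S) ∧
      (∃ᶠ y in 𝓝[<] d, y ∈ S) ∧ ν ≪ volume ∧ ν univ ≤ 2 * (ENNReal.ofReal (osc F (Icc c d)) + η) ∧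
      OscDominatedOn F S ν := by
  obtain ⟨m, hcm, hmd⟩ := exists_between hcd
  have hleft : Icc c m ⊆ Icc c d := Icc_subset_Icc_right hmd.le
  have hright : Icc m d ⊆ Icc c d := Icc_subset_Icc_left hcm.le
  obtain ⟨S, ν, hS, hScount, hSsub, hcS, hmS, hSacc, hν, hνuniv, hoscS⟩ :=
    exists_oscDominatedOn_left hcm (hF.mono hleft) hη
  obtain ⟨T, ν', hT, hTcount, hTsub, hmT, hdT, hTacc, hν', hνuniv', hoscT⟩ :=
    exists_oscDominatedOn_right hmd (hF.mono hright) hη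
  refine ⟨S ∪ T, ν + ν', hS.union hT, hScount.union hTcount, .inl hcS, .inr hdT,
    hSacc.mono fun y hy => .inl hy, hTacc.mono fun y hy => .inr hy, hν.add_left hν', ?_,
    hoscS.union hoscT hF hSsub hTsub hmS hmT⟩
  calc (ν + ν') univ ≤ (ENNReal.ofReal (osc F (Icc c m)) + η)
        + (ENNReal.ofReal (osc F (Icc m d)) + η) := add_le_add hνuniv hνuniv'
    _ ≤ (ENNReal.ofReal (osc F (Icc c d)) + η) + (ENNReal.ofReal (osc F (Icc c d)) + η) := by
        gcongr <;> exact osc_mono isCompact_Icc hF ‹_›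
    _ = 2 * (ENNReal.ofReal (osc F (Icc c d)) + η) := (two_mul _).symm

end Refinement

section FillGaps

variable {a b : ℝ} {F : ℝ → ℝ} {E : Set ℝ} {I : ℝ × ℝ} {u v : ℝ}

lemma le_and_le_of_mem_gaps (hI : I ∈ gaps (Ioo a b \ E)) : a ≤ I.1 ∧ I.2 ≤ b :=
  (Ioo_subset_Ioo_iff hI.1).1 (hI.2.1.trans sdiff_subset)

lemma endpoints_mem_of_mem_gaps (ha : a ∈ E) (hb : b ∈ E) (hI : I ∈ gaps (Ioo a b \ E)) :
    I.1 ∈ E ∧ I.2 ∈ E := by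
  obtain ⟨haI, hIb⟩ := le_and_le_of_mem_gaps hI
  obtain ⟨hlt, -, h1, h2⟩ := hI
  constructor
  · by_contra h
    exact h1 ⟨⟨haI.lt_of_ne fun h' => h (h' ▸ ha), hlt.trans_le hIb⟩, h⟩
  · by_contra h
    exact h2 ⟨⟨haI.trans_lt hlt, hIb.lt_of_ne fun h' => h (h' ▸ hb)⟩, h⟩

lemma exists_gap_of_disjoint_Ioo (hE : IsClosed E) (ha : a ∈ E) (hb : b ∈ E) (hau : a ≤ u)
    (huv : u < v) (hvb : v ≤ b) (h : Disjoint (Ioo u v) E) :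
    ∃ I ∈ gaps (Ioo a b \ E), I.1 ≤ u ∧ v ≤ I.2 := by
  obtain ⟨m, hum, hmv⟩ := exists_between huv
  obtain ⟨I, hI, hmI⟩ := exists_mem_gaps (isOpen_Ioo.sdiff hE) (bddBelow_Ioo.mono sdiff_subset)
    (bddAbove_Ioo.mono sdiff_subset) (x := m)
    ⟨⟨hau.trans_lt hum, hmv.trans_le hvb⟩, disjoint_left.1 h ⟨hum, hmv⟩⟩
  obtain ⟨h1, h2⟩ := endpoints_mem_of_mem_gaps ha hb hI
  exact ⟨I, hI, not_lt.1 fun h' => disjoint_right.1 h h1 ⟨h', hmI.1.trans hmv⟩,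
    not_lt.1 fun h' => disjoint_right.1 h h2 ⟨hum.trans hmI.2, h'⟩⟩

lemma hull_eq_Icc {K : Set ℝ} {l r : ℝ} (hl : l ∈ K) (hr : r ∈ K) (hlr : l ≤ r) :
    hull K l r = Icc l r := by
  have hleast : IsLeast (K ∩ Icc l r) l := ⟨⟨hl, le_rfl, hlr⟩, fun x hx => hx.2.1⟩
  have hgreatest : IsGreatest (K ∩ Icc l r) r := ⟨⟨hr, hlr, le_rfl⟩, fun x hx => hx.2.2⟩
  rw [hull, hleast.csInf_eq, hgreatest.csSup_eq]

lemma ACStar.tsum_osc_hull_ne_top {ι : Type*} [Countable ι] {l r : ι → ℝ} (hF : ACStar a b F E)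
    (hE : IsClosed E) (hEab : E ⊆ Icc a b) (hlr : NonOverlapping univ l r)
    (hvol : volume (⋃ i, Ioo (l i) (r i)) ≠ ∞) :
    ∑' i, ENNReal.ofReal (osc F (hull E (l i) (r i))) ≠ ∞ := by
  obtain ⟨δ, hδ, H⟩ := hF.exists_tsum_osc_hull_le hE hEab one_pos ι
  rw [measure_iUnion (fun i j hij => hlr.pairwiseDisjoint (mem_univ i) (mem_univ j) hij)
    fun _ => measurableSet_Ioo] at hvol
  obtain ⟨t, ht⟩ := ((tendsto_order.1 (ENNReal.tendsto_tsum_compl_atTop_zero hvol)).2 _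
    (ENNReal.ofReal_pos.2 hδ)).exists
  have htail : ∑' i : ((t : Set ι)ᶜ : Set ι), ENNReal.ofReal (osc F (hull E (l i) (r i))) ≠ ∞ :=
    ne_top_of_le_ne_top ENNReal.ofReal_ne_top (H (t : Set ι)ᶜ l r (hlr.mono (subset_univ _))
      ((measure_biUnion_le _ (to_countable _) _).trans_lt ht))
  rw [← ENNReal.summable.tsum_add_tsum_compl (s := (t : Set ι)) ENNReal.summable,
    Finset.tsum_subtype' t fun i => ENNReal.ofReal (osc F (hull E (l i) (r i)))]
  exact ENNReal.add_ne_top.2 ⟨ENNReal.sum_ne_top.2 fun _ _ => ENNReal.ofReal_ne_top, htail⟩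

lemma ACStar.tsum_osc_gaps_ne_top (hF : ACStar a b F E) (hE : IsClosed E) (hEab : E ⊆ Icc a b)
    (ha : a ∈ E) (hb : b ∈ E) :
    ∑' I : gaps (Ioo a b \ E), ENNReal.ofReal (osc F (Icc I.1.1 I.1.2)) ≠ ∞ := by
  have := (countable_gaps (Ioo a b \ E)).to_subtype
  have hgaps : NonOverlapping univ (fun I : gaps (Ioo a b \ E) => I.1.1) fun I => I.1.2 :=
    ⟨fun I _ => I.2.1.le, fun I _ J _ hIJ => (nonOverlapping_gaps _).2 I.2 J.2
      (Subtype.coe_ne_coe.2 hIJ)⟩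
  have hvol : volume (⋃ I : gaps (Ioo a b \ E), Ioo I.1.1 I.1.2) ≠ ∞ :=
    ne_top_of_le_ne_top measure_Ioo_lt_top.ne (measure_mono (t := Ioo a b)
      (iUnion_subset fun I => I.2.2.1.trans sdiff_subset))
  have hhull (I : gaps (Ioo a b \ E)) : hull E I.1.1 I.1.2 = Icc I.1.1 I.1.2 :=
    have hmem := endpoints_mem_of_mem_gaps ha hb I.2
    hull_eq_Icc hmem.1 hmem.2 I.2.1.le
  simpa only [hhull] using hF.tsum_osc_hull_ne_top hE hEab hgaps hvol

/-- The set obtained from `E ⊆ [a, b]` by adding to it, in each gap `I` of `E`, the points of `S I`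
that lie in `I`. -/
def fillGaps (a b : ℝ) (E : Set ℝ) (S : gaps (Ioo a b \ E) → Set ℝ) : Set ℝ :=
  Icc a b \ ⋃ I, Ioo I.1.1 I.1.2 \ S I

variable {S : gaps (Ioo a b \ E) → Set ℝ}

lemma isClosed_fillGaps (hS : ∀ I, IsClosed (S I)) : IsClosed (fillGaps a b E S) :=
  isClosed_Icc.sdiff (isOpen_iUnion fun I => isOpen_Ioo.sdiff (hS I))

lemma subset_fillGaps (hEab : E ⊆ Icc a b) : E ⊆ fillGaps a b E S := fun x hx => by
  refine ⟨hEab hx, fun h => ?_⟩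
  obtain ⟨I, hxI, -⟩ := mem_iUnion.1 h
  exact (I.2.2.1 hxI).2 hx

lemma fillGaps_inter_Ioo (I : gaps (Ioo a b \ E)) :
    fillGaps a b E S ∩ Ioo I.1.1 I.1.2 = S I ∩ Ioo I.1.1 I.1.2 := by
  ext x
  refine and_congr_left fun hxI => ⟨fun hx => ?_, fun hx => ⟨?_, fun h => ?_⟩⟩
  · by_contra hxS
    exact hx.2 (mem_iUnion.2 ⟨I, hxI, hxS⟩)
  · exact Ioo_subset_Icc_self (I.2.2.1 hxI).1
  · obtain ⟨J, hxJ, hxS⟩ := mem_iUnion.1 h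
    obtain rfl : J = I := Subtype.ext
      ((nonOverlapping_gaps _).pairwiseDisjoint.elim_set J.2 I.2 x hxJ hxI)
    exact hxS hx

lemma fillGaps_diff_subset (hE : IsClosed E) (ha : a ∈ E) (hb : b ∈ E) :
    fillGaps a b E S \ E ⊆ ⋃ I, S I := by
  rintro x ⟨hx, hxE⟩
  obtain ⟨I, hI, hxI⟩ := exists_mem_gaps (isOpen_Ioo.sdiff hE) (bddBelow_Ioo.mono sdiff_subset)
    (bddAbove_Ioo.mono sdiff_subset) (x := x) ⟨⟨hx.1.1.lt_of_ne fun h => hxE (h ▸ ha),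
      hx.1.2.lt_of_ne fun h => hxE (h ▸ hb)⟩, hxE⟩
  exact mem_iUnion.2 ⟨⟨I, hI⟩, ((fillGaps_inter_Ioo ⟨I, hI⟩).subset ⟨hx, hxI⟩).1⟩

lemma fillGaps_inter_Icc_subset {I : gaps (Ioo a b \ E)} (h1 : I.1.1 ∈ S I) (h2 : I.1.2 ∈ S I) :
    fillGaps a b E S ∩ Icc I.1.1 I.1.2 ⊆ S I := by
  rintro x ⟨hx, hxI⟩
  rcases hxI.1.eq_or_lt with rfl | hlt
  · exact h1
  rcases hxI.2.eq_or_lt with rfl | hgt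
  · exact h2
  · exact ((fillGaps_inter_Ioo I).subset ⟨hx, hlt, hgt⟩).1

lemma disjoint_Icc_of_disjoint_Ioo_fillGaps (hE : IsClosed E) (hEab : E ⊆ Icc a b) (ha : a ∈ E)
    (hb : b ∈ E) (hl : ∀ I, ∃ᶠ y in 𝓝[>] I.1.1, y ∈ S I) (hr : ∀ I, ∃ᶠ y in 𝓝[<] I.1.2, y ∈ S I)
    (hau : a ≤ u) (huv : u < v) (hvb : v ≤ b) (h : Disjoint (Ioo u v) (fillGaps a b E S)) :
    Disjoint (Icc u v) E := by
  obtain ⟨I, hI, hIu, hvI⟩ := exists_gap_of_disjoint_Ioo hE ha hb hau huv hvb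
    (h.mono_right (subset_fillGaps hEab))
  have notMem : ∀ y ∈ Ioo u v, y ∉ S ⟨I, hI⟩ := fun y hy hyS => disjoint_left.1 h hy
    ((fillGaps_inter_Ioo ⟨I, hI⟩).superset ⟨hyS, hIu.trans_lt hy.1, hy.2.trans_le hvI⟩).1
  have hlt : I.1 < u := hIu.lt_of_ne fun heq => hl ⟨I, hI⟩ (by
    filter_upwards [Ioo_mem_nhdsGT (heq ▸ huv)] with y hy using notMem y (heq ▸ hy))
  have hgt : v < I.2 := hvI.lt_of_ne fun heq => hr ⟨I, hI⟩ (by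
    filter_upwards [Ioo_mem_nhdsLT (heq ▸ huv)] with y hy using notMem y (heq ▸ hy))
  exact disjoint_left.2 fun x hx => (hI.2.1 ⟨hlt.trans_le hx.1, hx.2.trans_lt hgt⟩).2

lemma acStar_fillGaps {ν : gaps (Ioo a b \ E) → Measure ℝ} (hFc : ContinuousOn F (Icc a b))
    (hF : ACStar a b F E) (hE : IsClosed E) (hEab : E ⊆ Icc a b) (ha : a ∈ E) (hb : b ∈ E)
    (h1 : ∀ I, I.1.1 ∈ S I) (h2 : ∀ I, I.1.2 ∈ S I) (hν : ∀ I, ν I ≪ volume)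
    (hνtop : ∑' I, ν I univ ≠ ∞) (hosc : ∀ I, OscDominatedOn F (S I) (ν I)) :
    ACStar a b F (fillGaps a b E S) := by
  have : IsFiniteMeasure (Measure.sum ν) := ⟨by simpa using hνtop.lt_top⟩
  refine hF.of_osc_le_measure hFc hE hEab (subset_fillGaps hEab)
    (Measure.absolutelyContinuous_sum_left hν) fun p hp q hq hpq hdisj => ?_
  rcases hpq.eq_or_lt with rfl | hlt
  · simp [osc_of_subsingleton]
  obtain ⟨I, hI, hIp, hqI⟩ := exists_gap_of_disjoint_Ioo hE ha hb hp.2.1 hlt hq.2.2 hdisj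
  have hsub := fillGaps_inter_Icc_subset (h1 ⟨I, hI⟩) (h2 ⟨I, hI⟩)
  have hpS := hsub ⟨hp.1, hIp, hpq.trans hqI⟩
  have hqS := hsub ⟨hq.1, hIp.trans hpq, hqI⟩
  exact (hosc ⟨I, hI⟩ p hpS q hqS hpq).trans (Measure.le_sum ν ⟨I, hI⟩ _)

lemma ACStar.exists_refinement (hF : ACStar a b F E) (hFc : ContinuousOn F (Icc a b))
    (hE : IsClosed E) (hEab : E ⊆ Icc a b) (ha : a ∈ E) (hb : b ∈ E) :
    ∃ K, IsClosed K ∧ E ⊆ K ∧ K ⊆ Icc a b ∧ (K \ E).Countable ∧ ACStar a b F K ∧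
      ∀ u v, a ≤ u → u < v → v ≤ b → Disjoint (Ioo u v) K → Disjoint (Icc u v) E := by
  have := (countable_gaps (Ioo a b \ E)).to_subtype
  obtain ⟨η, hη, hηsum⟩ :=
    ENNReal.exists_pos_sum_of_countable' one_ne_zero (gaps (Ioo a b \ E))
  have hgap := fun I : gaps (Ioo a b \ E) => exists_oscDominatedOn I.2.1 (hFc.mono
    (Icc_subset_Icc (le_and_le_of_mem_gaps I.2).1 (le_and_le_of_mem_gaps I.2).2)) (hη I).ne'
  choose S ν hS hScount h1 h2 hl hr hν hνuniv hosc using hgap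
  have hνtop : ∑' I, ν I univ ≠ ∞ := by
    refine ne_top_of_le_ne_top ?_ (ENNReal.tsum_le_tsum hνuniv)
    rw [ENNReal.tsum_mul_left, ENNReal.tsum_add]
    exact ENNReal.mul_ne_top (by simp) (ENNReal.add_ne_top.2
      ⟨hF.tsum_osc_gaps_ne_top hE hEab ha hb, (hηsum.trans ENNReal.one_lt_top).ne⟩)
  exact ⟨fillGaps a b E S, isClosed_fillGaps hS, subset_fillGaps hEab, sdiff_subset,
    (countable_iUnion hScount).mono (fillGaps_diff_subset hE ha hb),
    acStar_fillGaps hFc hF hE hEab ha hb h1 h2 hν hνtop hosc,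
    fun u v => disjoint_Icc_of_disjoint_Ioo_fillGaps hE hEab ha hb hl hr⟩

end FillGaps

/-! ### Truncation to a subinterval -/

section ClampFn

variable {a b u v : ℝ} {f F : ℝ → ℝ} {x : ℝ}

/-- The function `F - F u` on `[u, v]`, extended to be constant on either side. If `F` is the
indefinite Denjoy integral of `f`, this is the one of `f` cut off to `(u, v)`. -/
def clampFn (u v : ℝ) (F : ℝ → ℝ) (x : ℝ) : ℝ := F (max u (min x v)) - F u

lemma clampFn_of_mem_Icc (hx : x ∈ Icc u v) : clampFn u v F x = F x - F u := by
  rw [clampFn, min_eq_left hx.2, max_eq_right hx.1]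

lemma clampFn_of_le_left (huv : u ≤ v) (hx : x ≤ u) : clampFn u v F x = 0 := by
  rw [clampFn, min_eq_left (hx.trans huv), max_eq_left hx, sub_self]

lemma clampFn_of_right_le (huv : u ≤ v) (hx : v ≤ x) : clampFn u v F x = F v - F u := by
  rw [clampFn, min_eq_right hx, max_eq_right huv]

lemma osc_clampFn_le {p q : ℝ} (huv : u ≤ v) (hF : ContinuousOn F (Icc p q)) :
    osc (clampFn u v F) (Icc p q) ≤ osc F (Icc p q) := by
  refine osc_le (osc_nonneg F _) fun x hx y hy => ?_
  rw [clampFn, clampFn, sub_sub_sub_cancel_right]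
  by_cases hmeet : max u p ≤ min v q
  · have clamp_mem {z : ℝ} (hz : z ∈ Icc p q) : max u (min z v) ∈ Icc p q := by grind
    exact abs_sub_le_osc isCompact_Icc hF (clamp_mem hx) (clamp_mem hy)
  · have hconst : max u (min x v) = max u (min y v) := by grind
    simpa [hconst] using osc_nonneg F (Icc p q)

lemma ACStar.clampFn {K : Set ℝ} (hF : ACStar a b F K) (hFc : ContinuousOn F (Icc a b))
    (huv : u ≤ v) : ACStar a b (clampFn u v F) K :=
  hF.of_osc_le inter_subset_left fun _ _ _ _ hap _ hqb =>
    osc_clampFn_le huv (hFc.mono (Icc_subset_Icc hap hqb))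

lemma hasDerivAt_clampFn (huv : u ≤ v) (hF : HasDerivAt F (f x) x) (hxu : x ≠ u) (hxv : x ≠ v) :
    HasDerivAt (clampFn u v F) ((Ioo u v).indicator f x) x := by
  rcases hxu.lt_or_gt with hlt | hgt
  · rw [indicator_of_notMem fun h => hlt.not_gt h.1]
    refine (hasDerivAt_const x 0).congr_of_eventuallyEq ?_
    filter_upwards [Iio_mem_nhds hlt] with y hy using clampFn_of_le_left huv (le_of_lt hy)
  rcases hxv.lt_or_gt with hlt | hgt'
  · rw [indicator_of_mem (mem_Ioo.2 ⟨hgt, hlt⟩)]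
    refine (hF.sub_const (F u)).congr_of_eventuallyEq ?_
    filter_upwards [Icc_mem_nhds hgt hlt] with y hy using clampFn_of_mem_Icc hy
  · rw [indicator_of_notMem fun h => hgt'.not_gt h.2]
    refine (hasDerivAt_const x (F v - F u)).congr_of_eventuallyEq ?_
    filter_upwards [Ioi_mem_nhds hgt'] with y hy using clampFn_of_right_le huv (le_of_lt hy)

lemma HasDenjoyIntegralFn.clampFn (hF : HasDenjoyIntegralFn a b f F) (hau : a ≤ u) (huv : u ≤ v)
    (hvb : v ≤ b) : HasDenjoyIntegralFn a b ((Ioo u v).indicator f) (clampFn u v F) := by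
  obtain ⟨hFc, -, ⟨C, hC, hCab⟩, hF'⟩ := hF
  refine ⟨?_, clampFn_of_le_left huv hau,
    ⟨C, fun n => ⟨(hC n).1, (hC n).2.1, (hC n).2.2.clampFn hFc huv⟩, hCab⟩, ?_⟩
  · refine (hFc.comp (f := fun x => max u (min x v)) (by fun_prop) fun x _ => ?_).sub
      continuousOn_const
    exact ⟨hau.trans (le_max_left _ _), max_le (huv.trans hvb) ((min_le_right _ _).trans hvb)⟩
  · have ae_ne (z : ℝ) : ∀ᵐ x ∂volume.restrict (Icc a b), x ≠ z :=
      ae_restrict_of_ae (Measure.ae_ne volume z)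
    filter_upwards [hF', ae_ne u, ae_ne v] with x hx hxu hxv
    exact hasDerivAt_clampFn huv hx hxu hxv

end ClampFn

/-! ### Transfinite iteration of derivatives -/

section DerivIter

variable {D D' : Set ℝ → Set ℝ} {K O : Set ℝ} {α β : Ordinal.{0}}

lemma derivIter_zero (D : Set ℝ → Set ℝ) (K : Set ℝ) : derivIter D K 0 = K :=
  Ordinal.limitRecOn_zero ..

lemma derivIter_add_one (D : Set ℝ → Set ℝ) (K : Set ℝ) (α : Ordinal.{0}) :
    derivIter D K (α + 1) = D (derivIter D K α) :=
  Ordinal.limitRecOn_add_one ..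

lemma derivIter_of_isSuccLimit (D : Set ℝ → Set ℝ) (K : Set ℝ) (hα : Order.IsSuccLimit α) :
    derivIter D K α = ⋂ β : Iio α, derivIter D K β :=
  Ordinal.limitRecOn_limit _ _ _ _ hα

lemma derivIter_antitone (hD : ∀ L, D L ⊆ L) (K : Set ℝ) : Antitone (derivIter D K) := by
  intro β α h
  induction α using Ordinal.limitRecOn with
  | zero => rw [nonpos_iff_eq_zero.1 h]
  | add_one α ih =>
    rcases h.eq_or_lt with rfl | hlt
    · exact Subset.rfl
    · rw [derivIter_add_one]
      exact (hD _).trans (ih (Order.lt_add_one_iff.1 hlt))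
  | limit α hα _ =>
    rcases h.eq_or_lt with rfl | hlt
    · exact Subset.rfl
    · rw [derivIter_of_isSuccLimit D K hα]
      exact iInter_subset (fun γ : Iio α => derivIter D K γ) ⟨β, hlt⟩

lemma derivIter_subset (hD : ∀ L, D L ⊆ L) (K : Set ℝ) (α : Ordinal.{0}) :
    derivIter D K α ⊆ K :=
  (derivIter_antitone hD K zero_le).trans (derivIter_zero D K).subset

lemma isClosed_derivIter (hD : ∀ L, IsClosed L → IsClosed (D L)) (hK : IsClosed K)
    (α : Ordinal.{0}) : IsClosed (derivIter D K α) := by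
  induction α using Ordinal.limitRecOn with
  | zero => rwa [derivIter_zero]
  | add_one α ih =>
    rw [derivIter_add_one]
    exact hD _ ih
  | limit α hα ih =>
    rw [derivIter_of_isSuccLimit D K hα]
    exact isClosed_iInter fun γ => ih γ γ.2

lemma derivIter_inter_subset (h : ∀ L L', L ∩ O ⊆ L' → D L ∩ O ⊆ D' L') (K : Set ℝ)
    (α : Ordinal.{0}) : derivIter D K α ∩ O ⊆ derivIter D' K α := by
  induction α using Ordinal.limitRecOn with
  | zero => exact (derivIter_zero D K).symm ▸ (derivIter_zero D' K).symm ▸ inter_subset_left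
  | add_one α ih =>
    rw [derivIter_add_one, derivIter_add_one]
    exact h _ _ ih
  | limit α hα ih =>
    rw [derivIter_of_isSuccLimit D K hα, derivIter_of_isSuccLimit D' K hα]
    exact fun x hx => mem_iInter.2 fun γ => ih γ γ.2 ⟨mem_iInter.1 hx.1 γ, hx.2⟩

lemma exists_lt_disjoint_derivIter (hD : ∀ L, D L ⊆ L) (hDc : ∀ L, IsClosed L → IsClosed (D L))
    (hK : IsClosed K) {J : Set ℝ} (hJ : IsCompact J) (hα : α ≠ 0)
    (h : Disjoint J (derivIter D K α)) :
    ∃ β < α, Disjoint J (derivIter D K (β + 1)) := by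
  rcases Ordinal.zero_or_succ_or_isSuccLimit α with h0 | ⟨β, rfl⟩ | hlim
  · exact absurd h0 hα
  · exact ⟨β, Order.lt_succ β, h⟩
  · rw [derivIter_of_isSuccLimit D K hlim, disjoint_iff_inter_eq_empty] at h
    have : Nonempty (Iio α) := ⟨⟨0, pos_iff_ne_zero.2 hα⟩⟩
    obtain ⟨β, hβ⟩ := hJ.elim_directed_family_closed (fun β : Iio α => derivIter D K β)
      (fun β => isClosed_derivIter hDc hK β) h
      ((derivIter_antitone hD K).comp_monotone (Subtype.mono_coe _)).directed_ge
    exact ⟨β, β.2, (disjoint_iff_inter_eq_empty.2 hβ).mono_right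
      (derivIter_antitone hD K (Order.le_succ β.1))⟩

end DerivIter

section DfF

variable {a b u v : ℝ} {f g F G : ℝ → ℝ} {K L O : Set ℝ}

lemma DfF_subset (a b : ℝ) (f F : ℝ → ℝ) (K : Set ℝ) : DfF a b f F K ⊆ K :=
  union_subset (sep_subset _ _) (sep_subset _ _)

lemma isClosed_DfF (a b : ℝ) (f F : ℝ → ℝ) (K : Set ℝ) (hK : IsClosed K) :
    IsClosed (DfF a b f F K) :=
  (isClosed_localDeriv (IntegrableOn f · volume) hK).union (isClosed_localDeriv (ACStar a b F) hK)

lemma DfF_inter_subset (hO : IsOpen O) (hKL : K ∩ O ⊆ L)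
    (hint : ∀ s t, s ⊆ O → s ⊆ t → IntegrableOn g t → IntegrableOn f s)
    (hac : ∀ s t, s ⊆ O → s ⊆ t → ACStar a b G t → ACStar a b F s) :
    DfF a b f F K ∩ O ⊆ DfF a b g G L := by
  rw [DfF, union_inter_distrib_right]
  exact union_subset_union (localDeriv_inter_subset hO hKL hint)
    (localDeriv_inter_subset hO hKL hac)

lemma DfF_inter_subset_of_eqOn (hO : IsOpen O) (hO' : O.OrdConnected) (hfg : EqOn f g O)
    (hFG : ∀ x ∈ O, ∀ y ∈ O, F x - F y = G x - G y) (hKL : K ∩ O ⊆ L) :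
    DfF a b f F K ∩ O ⊆ DfF a b g G L := by
  refine DfF_inter_subset hO hKL (fun s t hsO hst h => ?_) fun s t hsO hst h => ?_
  · exact (h.mono_set hst).congr (ae_mono (Measure.restrict_mono hsO le_rfl)
      (ae_restrict_of_forall_mem hO.measurableSet fun x hx => (hfg hx).symm))
  · refine h.of_osc_le (inter_subset_left.trans hst) fun p hp q hq _ _ _ => ?_
    have hsub : Icc p q ⊆ O := hO'.out (hsO hp) (hsO hq)
    exact (osc_congr fun x hx y hy => hFG x (hsub hx) y (hsub hy)).le

lemma DfF_indicator_clampFn_subset (hFc : ContinuousOn F (Icc a b)) (huv : u ≤ v) (hKL : K ⊆ L) :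
    DfF a b ((Ioo u v).indicator f) (clampFn u v F) K ⊆ DfF a b f F L :=
  (inter_univ _).superset.trans (DfF_inter_subset isOpen_univ (inter_subset_left.trans hKL)
    (fun _ _ _ hst h => (h.mono_set hst).indicator measurableSet_Ioo)
    fun _ _ _ hst h => (h.mono hst).clampFn hFc huv)

lemma acStar_zero (a b : ℝ) (K : Set ℝ) : ACStar a b 0 K := fun ε hε => ⟨1, one_pos, fun D _ _ =>
  (Finset.sum_nonpos fun _ _ => osc_le le_rfl fun x _ y _ => by simp).trans_lt hε⟩

lemma DfF_indicator_clampFn_subset_Icc (huv : u ≤ v) (f F : ℝ → ℝ) (K : Set ℝ) :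
    DfF a b ((Ioo u v).indicator f) (clampFn u v F) K ⊆ Icc u v := by
  have hzero : DfF a b 0 0 K = ∅ := union_empty_iff.2
    ⟨localDeriv_eq_empty (P := (IntegrableOn 0 · volume)) fun _ _ => integrableOn_zero,
      localDeriv_eq_empty fun s _ => acStar_zero a b s⟩
  have hIio : DfF a b ((Ioo u v).indicator f) (clampFn u v F) K ∩ Iio u ⊆ DfF a b 0 0 K :=
    DfF_inter_subset_of_eqOn isOpen_Iio ordConnected_Iio
      (fun x hx => indicator_of_notMem (fun h => h.1.not_gt hx) f) (fun x hx y hy => by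
        simp [clampFn_of_le_left huv (le_of_lt hx), clampFn_of_le_left huv (le_of_lt hy)])
      inter_subset_left
  have hIoi : DfF a b ((Ioo u v).indicator f) (clampFn u v F) K ∩ Ioi v ⊆ DfF a b 0 0 K :=
    DfF_inter_subset_of_eqOn isOpen_Ioi ordConnected_Ioi
      (fun x hx => indicator_of_notMem (fun h => h.2.not_gt hx) f) (fun x hx y hy => by
        simp [clampFn_of_right_le huv (le_of_lt hx), clampFn_of_right_le huv (le_of_lt hy)])
      inter_subset_left
  rw [hzero] at hIio hIoi
  exact fun x hx => ⟨not_lt.1 fun h => hIio ⟨hx, h⟩, not_lt.1 fun h => hIoi ⟨hx, h⟩⟩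

lemma derivIter_indicator_clampFn_subset (hFc : ContinuousOn F (Icc a b)) (huv : u ≤ v)
    (K : Set ℝ) (α : Ordinal.{0}) :
    derivIter (DfF a b ((Ioo u v).indicator f) (clampFn u v F)) K (α + 1) ⊆
      Icc u v ∩ derivIter (DfF a b f F) K (α + 1) := by
  refine subset_inter ?_ ((inter_univ _).superset.trans (derivIter_inter_subset
    (fun L L' hLL' => inter_subset_left.trans
      (DfF_indicator_clampFn_subset hFc huv ((inter_univ L).superset.trans hLL'))) K _))
  rw [derivIter_add_one]
  exact DfF_indicator_clampFn_subset_Icc huv f F _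

lemma derivIter_inter_Ioo_subset_indicator_clampFn (a b u v : ℝ) (f F : ℝ → ℝ) (K : Set ℝ)
    (α : Ordinal.{0}) :
    derivIter (DfF a b f F) K α ∩ Ioo u v ⊆
      derivIter (DfF a b ((Ioo u v).indicator f) (clampFn u v F)) K α :=
  derivIter_inter_subset (fun _ _ => DfF_inter_subset_of_eqOn isOpen_Ioo ordConnected_Ioo
    (fun x hx => (indicator_of_mem hx f).symm) fun x hx y hy => by
      rw [clampFn_of_mem_Icc (Ioo_subset_Icc_self hx), clampFn_of_mem_Icc (Ioo_subset_Icc_self hy),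
        sub_sub_sub_cancel_right]) K α

end DfF

/-! ### The hierarchy -/

section Hierarchy

variable {a b : ℝ} {f F : ℝ → ℝ} {K : Set ℝ} {X : Set (ℝ → ℝ)}

lemma denLevel_zero (a b : ℝ) : DenLevel a b 0 = {f | IntegrableOn f (Icc a b)} := by
  rw [DenLevel, WellFounded.fix_eq, if_pos rfl]

lemma denLevel_of_ne_zero (a b : ℝ) {α : Ordinal.{0}} (hα : α ≠ 0) :
    DenLevel a b α = StepSet a b (LimSet a b (⋃ β : Iio α, DenLevel a b β)) := by
  rw [DenLevel, WellFounded.fix_eq, if_neg hα]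

lemma exists_seq_Ioo_eq {U : Set ℝ} (hU : IsOpen U) (hbelow : BddBelow U) (habove : BddAbove U) :
    ∃ c d : ℕ → ℝ, (∀ n, c n ≤ d n) ∧
      (Pairwise fun m n => Disjoint (Ioo (c m) (d m)) (Ioo (c n) (d n))) ∧
      ⋃ n, Ioo (c n) (d n) = U := by
  have := (countable_gaps U).to_subtype
  obtain ⟨e, he⟩ := Countable.exists_injective_nat (gaps U)
  set J : ℕ → ℝ × ℝ := Function.extend e Subtype.val fun _ => (0, 0)
  have hJ (n : ℕ) : (∃ I, e I = n ∧ J n = I) ∨ J n = (0, 0) := by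
    by_cases h : ∃ I, e I = n
    · obtain ⟨I, rfl⟩ := h
      exact .inl ⟨I, rfl, he.extend_apply ..⟩
    · exact .inr (Function.extend_apply' _ _ _ h)
  refine ⟨fun n => (J n).1, fun n => (J n).2, fun n => ?_, fun m n hmn => ?_, ?_⟩
  · obtain ⟨I, -, hI⟩ | hn := hJ n
    · simpa only [hI] using I.2.1.le
    · simp [hn]
  · obtain ⟨I, hIm, hI⟩ | hm := hJ m
    · obtain ⟨I', hIn, hI'⟩ | hn := hJ n
      · have hne : (I : ℝ × ℝ) ≠ I' := fun h => hmn (hIm ▸ hIn ▸ congrArg e (Subtype.ext h))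
        simpa only [hI, hI'] using (nonOverlapping_gaps U).pairwiseDisjoint I.2 I'.2 hne
      · simp [hn]
    · simp [hm]
  · refine (iUnion_subset fun n => ?_).antisymm ?_
    · obtain ⟨I, -, hI⟩ | hn := hJ n
      · simpa only [hI] using I.2.2.1
      · simp [hn]
    · rw [← biUnion_gaps hU hbelow habove]
      refine iUnion₂_subset fun I hI => subset_iUnion_of_subset (e ⟨I, hI⟩) ?_
      have hJI : J (e ⟨I, hI⟩) = I := he.extend_apply ..
      simp only [hJI, Subset.rfl]

lemma HasDenjoyIntegralFn.tendsto_denjoyIntegral_left (hF : HasDenjoyIntegralFn a b f F)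
    (hab : a < b) : Tendsto (fun c => denjoyIntegral c b f) (𝓝[>] a) (𝓝 (F b)) := by
  have hFa : Tendsto F (𝓝[>] a) (𝓝 0) :=
    hF.2.1 ▸ (hF.1 a (left_mem_Icc.2 hab.le)).mono_of_mem_nhdsWithin (Icc_mem_nhdsGT hab)
  have hlim : Tendsto (fun c => F b - F c) (𝓝[>] a) (𝓝 (F b - 0)) := tendsto_const_nhds.sub hFa
  rw [sub_zero] at hlim
  refine hlim.congr' ?_
  filter_upwards [Ioo_mem_nhdsGT hab] with c hc
  exact ((hF.restrict hc.1.le le_rfl).denjoyIntegral_eq hc.2.le).symm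

lemma HasDenjoyIntegralFn.tendsto_denjoyIntegral_right (hF : HasDenjoyIntegralFn a b f F)
    (hab : a < b) : Tendsto (fun c => denjoyIntegral a c f) (𝓝[<] b) (𝓝 (F b)) := by
  refine ((hF.1 b (right_mem_Icc.2 hab.le)).mono_of_mem_nhdsWithin (Icc_mem_nhdsLT hab)).congr' ?_
  filter_upwards [Ioo_mem_nhdsLT hab] with c hc
  rw [(hF.restrict le_rfl hc.2.le).denjoyIntegral_eq hc.1.le, hF.2.1, sub_zero]

lemma HasDenjoyIntegralFn.mem_limSet (hF : HasDenjoyIntegralFn a b f F) (hab : a < b)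
    (hX : (Ioo a b).indicator f ∈ X) : f ∈ LimSet a b X :=
  ⟨fun _ => a, fun _ => b, fun _ => ⟨le_rfl, le_rfl, le_rfl, le_rfl⟩, iUnion_const _,
    fun _ _ => hX, ⟨F b, hF.tendsto_denjoyIntegral_left hab⟩,
    ⟨F b, hF.tendsto_denjoyIntegral_right hab⟩⟩

lemma HasDenjoyIntegralFn.mem_stepSet (hF : HasDenjoyIntegralFn a b f F) (hK : IsClosed K)
    (hKab : K ⊆ Icc a b) (hfK : IntegrableOn f K) (hFK : ACStar a b F K)
    (hX : ∀ u v, a ≤ u → u < v → v ≤ b → Disjoint (Ioo u v) K → (Ioo u v).indicator f ∈ X) :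
    f ∈ StepSet a b X := by
  obtain ⟨c, d, hcd, hdisj, hunion⟩ := exists_seq_Ioo_eq (isOpen_Ioo.sdiff hK)
    (bddBelow_Ioo.mono sdiff_subset) (bddAbove_Ioo.mono sdiff_subset)
  refine ⟨K, hK, hKab, c, d, hcd, hdisj, hunion, hfK, fun n hn => ?_, F, hF, hFK⟩
  have hsub : Ioo (c n) (d n) ⊆ Ioo a b \ K := hunion ▸ subset_iUnion_of_subset n Subset.rfl
  obtain ⟨hac, hdb⟩ := (Ioo_subset_Ioo_iff hn).1 (hsub.trans sdiff_subset)
  exact hX _ _ hac hn hdb (disjoint_left.2 fun x hx => (hsub hx).2)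

lemma integrableOn_of_countable_diff {E : Set ℝ} (hf : IntegrableOn f E) (hKE : (K \ E).Countable) :
    IntegrableOn f K :=
  (hf.union (.of_measure_zero (hKE.measure_zero volume))).mono_set (by simp)

lemma integrableOn_insert_insert (hf : IntegrableOn f K) (x y : ℝ) :
    IntegrableOn f (insert x (insert y K)) :=
  integrableOn_of_countable_diff hf ((to_countable {x, y}).mono (by grind))

-- A `Step` decomposition along `K` itself would involve the truncations of `f` to the gaps of `K`,
-- whose closures meet `K`; the hypothesis controls only intervals at a distance from `K`.
lemma HasDenjoyIntegralFn.mem_stepSet_limSet (hF : HasDenjoyIntegralFn a b f F) (hab : a < b)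
    (hK : IsCompact K) (hKab : K ⊆ Icc a b) (hfK : IntegrableOn f K) (hFK : ACStar a b F K)
    (hX : ∀ u v, a ≤ u → u < v → v ≤ b → Disjoint (Icc u v) K → (Ioo u v).indicator f ∈ X) :
    f ∈ StepSet a b (LimSet a b X) := by
  have hE : IsCompact (insert a (insert b K)) := (hK.insert b).insert a
  have hEab : insert a (insert b K) ⊆ Icc a b :=
    insert_subset (left_mem_Icc.2 hab.le) (insert_subset (right_mem_Icc.2 hab.le) hKab)
  obtain ⟨K', hK', -, hK'ab, hcount, hFK', hgap⟩ :=
    (acStar_insert (acStar_insert hFK hK b) (hK.insert b) a).exists_refinement hF.1 hE.isClosed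
      hEab (mem_insert _ _) (mem_insert_of_mem _ (mem_insert _ _))
  refine hF.mem_stepSet hK' hK'ab
    (integrableOn_of_countable_diff (integrableOn_insert_insert hfK a b) hcount) hFK'
    fun u v hau huv hvb hdisj => (hF.clampFn hau huv.le hvb).mem_limSet hab ?_
  rw [indicator_indicator, inter_eq_right.2 (Ioo_subset_Ioo hau hvb)]
  exact hX u v hau huv hvb ((hgap u v hau huv hvb hdisj).mono_right (by grind))

lemma HasDenjoyIntegralFn.exists_of_mem_stepSet_limSet (hF : HasDenjoyIntegralFn a b f F)
    (hf : f ∈ StepSet a b (LimSet a b X)) :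
    ∃ E, IntegrableOn f E ∧ ACStar a b F E ∧
      ∀ x ∈ Icc a b \ E, ∃ u v, a ≤ u ∧ v ≤ b ∧ x ∈ Ioo u v ∧ (Ioo u v).indicator f ∈ X := by
  obtain ⟨K, hKc, hKab, c, d, -, -, hunion, hfK, hlim, G, hG, hGK⟩ := hf
  have hK : IsCompact K := isCompact_Icc.of_isClosed_subset hKc hKab
  have hFK : ACStar a b F K :=
    hGK.congr fun x hx y hy => by rw [hG.unique hF hx, hG.unique hF hy]
  refine ⟨insert a (insert b K), integrableOn_insert_insert hfK a b,
    acStar_insert (acStar_insert hFK hK b) (hK.insert b) a, fun x ⟨hxab, hxE⟩ => ?_⟩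
  have hxU : x ∈ Ioo a b \ K := by grind
  obtain ⟨n, hxn⟩ := mem_iUnion.1 (hunion ▸ hxU)
  obtain ⟨A, B, hAB, hABunion, hX, -, -⟩ := hlim n (hxn.1.trans hxn.2)
  obtain ⟨m, hxm⟩ := mem_iUnion.1 (hABunion ▸ hxU.1)
  refine ⟨max (A m) (c n), min (B m) (d n), le_max_of_le_left (hAB m).1,
    min_le_of_left_le (hAB m).2.1, ⟨max_lt hxm.1 hxn.1, lt_min hxm.2 hxn.2⟩, ?_⟩
  simpa only [indicator_indicator, Ioo_inter_Ioo] using hX m (hxm.1.trans hxm.2)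

theorem derivIter_empty_iff_denLevel_general (hab : a < b) (α : Ordinal.{0})
    (hF : HasDenjoyIntegralFn a b f F) :
    derivIter (DfF a b f F) (Icc a b) (α + 1) = ∅ ↔ f ∈ DenLevel a b α := by
  induction α using WellFoundedLT.induction generalizing f F with | ind α IH
  rcases eq_or_ne α 0 with rfl | hα
  · rw [derivIter_add_one, derivIter_zero, denLevel_zero, DfF_eq_empty_iff isCompact_Icc]
    exact and_iff_left_of_imp (hF.acStar hab.le)
  have hsub := derivIter_subset (DfF_subset a b f F) (Icc a b) α
  have hcompact := isCompact_Icc.of_isClosed_subset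
    (isClosed_derivIter (isClosed_DfF a b f F) isClosed_Icc α) hsub
  rw [derivIter_add_one, DfF_eq_empty_iff hcompact, denLevel_of_ne_zero a b hα]
  constructor
  · rintro ⟨hint, hac⟩
    refine hF.mem_stepSet_limSet hab hcompact hsub hint hac fun u v hau huv hvb hdisj => ?_
    obtain ⟨β, hβ, hβdisj⟩ := exists_lt_disjoint_derivIter (DfF_subset a b f F)
      (isClosed_DfF a b f F) isClosed_Icc isCompact_Icc hα hdisj
    exact mem_iUnion.2 ⟨⟨β, hβ⟩, (IH β hβ (hF.clampFn hau huv.le hvb)).1 (subset_empty_iff.1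
      ((derivIter_indicator_clampFn_subset hF.1 huv.le _ β).trans hβdisj.inter_eq.subset))⟩
  · intro hf
    obtain ⟨E, hfE, hFE, hgap⟩ := hF.exists_of_mem_stepSet_limSet hf
    suffices hKE : derivIter (DfF a b f F) (Icc a b) α ⊆ E from
      ⟨hfE.mono_set hKE, hFE.mono hKE⟩
    intro x hx
    by_contra hxE
    obtain ⟨u, v, hau, hvb, hxuv, hmem⟩ := hgap x ⟨hsub hx, hxE⟩
    obtain ⟨⟨β, hβ⟩, hβmem⟩ := mem_iUnion.1 hmem
    have hempty := (IH β hβ (hF.clampFn hau (hxuv.1.trans hxuv.2).le hvb)).2 hβmem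
    have hxβ := derivIter_antitone (DfF_subset a b f F) _ (Order.add_one_le_of_lt hβ) hx
    exact hempty.subset (derivIter_inter_Ioo_subset_indicator_clampFn a b u v f F _ _ ⟨hxβ, hxuv⟩)

end Hierarchy

/-- Calibration: `D_{f,F}^(α+1)([a,b]) = ∅` iff `f ∈ Den_α[a,b]`. -/
theorem derivIter_empty_iff_denLevel (a b : ℝ) (hab : a < b)
    (α : Ordinal.{0}) (hα : α.card ≤ Cardinal.aleph0)
    (f F : ℝ → ℝ) (hF : HasDenjoyIntegralFn a b f F) :
    derivIter (DfF a b f F) (Icc a b) (α + 1) = ∅ ↔ f ∈ DenLevel a b α :=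
  derivIter_empty_iff_denLevel_general hab α hF
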